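/- arXiv:2001.11952 — 2 statements merged into one kernel-verified Lean document; each statement's English description precedes it below -/
import Mathlib

section
/- Let κ, A, B, τ, L > 0 and set d* = κL²/π². Consider the one-dimensional logistic steady-state system: −d u″(x) = κ u(x)(1 − A u(x) − B v(x)) and −d v″(x) = (1/τ)(u(x) − v(x)) for x ∈ (0, L), with u(0) = u(L) = v(0) = v(L) = 0. Then: (i) any nonnegative classical solution satisfies 0 ≤ u(x) ≤ 1/A and 0 ≤ v(x) ≤ 1/A on (0, L); (ii) for each d with 0 < d < d* there is exactly one positive classical solution; (iii) for d ≥ d* there is no positive classical solution. -/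
open Set Real

/-- A nonnegative classical solution of the 1D logistic steady state system:
−d u″ = κu(1 − Au − Bv), −d v″ = (1/τ)(u − v) on (0, L) with zero Dirichlet data. -/
def IsNonnegLogSol (L d τ κ A B : ℝ) (u v : ℝ → ℝ) : Prop :=
  ContDiffOn ℝ 2 u (Icc 0 L) ∧ ContDiffOn ℝ 2 v (Icc 0 L) ∧
  (∀ x ∈ Ioo 0 L, 0 ≤ u x) ∧ (∀ x ∈ Ioo 0 L, 0 ≤ v x) ∧
  (∀ x ∈ Ioo 0 L, -(d * deriv (deriv u) x) = κ * u x * (1 - A * u x - B * v x)) ∧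
  (∀ x ∈ Ioo 0 L, -(d * deriv (deriv v) x) = (1 / τ) * (u x - v x)) ∧
  u 0 = 0 ∧ u L = 0 ∧ v 0 = 0 ∧ v L = 0

/-- A positive classical solution of the 1D logistic steady state system. -/
def IsPosLogSol (L d τ κ A B : ℝ) (u v : ℝ → ℝ) : Prop :=
  IsNonnegLogSol L d τ κ A B u v ∧
  (∀ x ∈ Ioo 0 L, 0 < u x) ∧ (∀ x ∈ Ioo 0 L, 0 < v x)

namespace LogisticSteady

open Filter Topology

/-- A real function on `[0, L]` together with its first and second derivatives. -/
structure TwiceDiff (L : ℝ) where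
  /-- the function -/
  f : ℝ → ℝ
  /-- the first derivative -/
  f1 : ℝ → ℝ
  /-- the second derivative -/
  f2 : ℝ → ℝ
  hasDeriv : ∀ x ∈ Icc 0 L, HasDerivWithinAt f (f1 x) (Icc 0 L) x
  hasDeriv1 : ∀ x ∈ Icc 0 L, HasDerivWithinAt f1 (f2 x) (Icc 0 L) x

namespace TwiceDiff

variable {L : ℝ}

/-- Pointwise negation. -/
def neg (g : TwiceDiff L) : TwiceDiff L where
  f x := -g.f x
  f1 x := -g.f1 x
  f2 x := -g.f2 x
  hasDeriv x hx := (g.hasDeriv x hx).neg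
  hasDeriv1 x hx := (g.hasDeriv1 x hx).neg

/-- Pointwise difference. -/
def sub (g h : TwiceDiff L) : TwiceDiff L where
  f x := g.f x - h.f x
  f1 x := g.f1 x - h.f1 x
  f2 x := g.f2 x - h.f2 x
  hasDeriv x hx := (g.hasDeriv x hx).sub (h.hasDeriv x hx)
  hasDeriv1 x hx := (g.hasDeriv1 x hx).sub (h.hasDeriv1 x hx)

/-- The zero function. -/
def zero (L : ℝ) : TwiceDiff L where
  f _ := 0
  f1 _ := 0
  f2 _ := 0
  hasDeriv x _ := hasDerivWithinAt_const x _ 0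
  hasDeriv1 x _ := hasDerivWithinAt_const x _ 0

theorem continuousOn (g : TwiceDiff L) : ContinuousOn g.f (Icc 0 L) :=
  fun x hx => (g.hasDeriv x hx).continuousWithinAt

theorem continuousOn1 (g : TwiceDiff L) : ContinuousOn g.f1 (Icc 0 L) :=
  fun x hx => (g.hasDeriv1 x hx).continuousWithinAt

theorem hasDerivAt (g : TwiceDiff L) {x : ℝ} (hx : x ∈ Ioo 0 L) : HasDerivAt g.f (g.f1 x) x :=
  (g.hasDeriv x (Ioo_subset_Icc_self hx)).hasDerivAt (Icc_mem_nhds hx.1 hx.2)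

theorem hasDerivAt1 (g : TwiceDiff L) {x : ℝ} (hx : x ∈ Ioo 0 L) : HasDerivAt g.f1 (g.f2 x) x :=
  (g.hasDeriv1 x (Ioo_subset_Icc_self hx)).hasDerivAt (Icc_mem_nhds hx.1 hx.2)

/-- At a minimum over a segment starting at `a`, the derivative in the direction of the segment
is nonnegative. -/
theorem mul_deriv_nonneg (g : TwiceDiff L) {a y : ℝ} (ha : a ∈ Icc 0 L) (hy : y ∈ Icc 0 L)
    (h : ∀ x ∈ uIcc a y, g.f a ≤ g.f x) : 0 ≤ (y - a) * g.f1 a := by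
  have hs : uIcc a y ⊆ Icc 0 L := uIcc_subset_Icc ha hy
  have hmin : IsLocalMinOn g.f (uIcc a y) a := by
    filter_upwards [self_mem_nhdsWithin] with x hx using h x hx
  have hd := ((g.hasDeriv a ha).mono hs).hasFDerivWithinAt
  have := hmin.hasFDerivWithinAt_nonneg hd
    (sub_mem_posTangentConeAt_of_segment_subset (y := y) (by rw [segment_eq_uIcc]))
  simpa using this

/-- Sturm comparison through the Wronskian: a function which is positive between two consecutive
zeros cannot oscillate more slowly than the positive function `φ`. -/
theorem sturm_comparison (g φ : TwiceDiff L) {a b : ℝ} (ha : 0 ≤ a) (hab : a < b) (hb : b ≤ L)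
    (ga : g.f a = 0) (gb : g.f b = 0) (hg : ∀ x ∈ Ioo a b, 0 < g.f x)
    (hφ : ∀ x ∈ Icc 0 L, 0 ≤ φ.f x)
    (h : ∀ x ∈ Ioo a b, 0 < φ.f x * g.f2 x - g.f x * φ.f2 x) : False := by
  have hsub : Icc a b ⊆ Icc 0 L := Icc_subset_Icc ha hb
  have haI : a ∈ Icc 0 L := hsub (left_mem_Icc.2 hab.le)
  have hbI : b ∈ Icc 0 L := hsub (right_mem_Icc.2 hab.le)
  have hnn : ∀ x ∈ Icc a b, 0 ≤ g.f x := by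
    intro x hx
    rcases eq_or_lt_of_le hx.1 with h1 | h1
    · rw [← h1, ga]
    rcases eq_or_lt_of_le hx.2 with h2 | h2
    · rw [h2, gb]
    exact (hg x ⟨h1, h2⟩).le
  have hda : 0 ≤ g.f1 a := by
    have := g.mul_deriv_nonneg haI hbI (by
      rw [uIcc_of_le hab.le, ga]; exact hnn)
    exact nonneg_of_mul_nonneg_right this (sub_pos.2 hab)
  have hdb : g.f1 b ≤ 0 := by
    have := g.mul_deriv_nonneg hbI haI (by
      rw [uIcc_of_ge hab.le, gb]; exact hnn)
    nlinarith
  have hmono : StrictMonoOn (fun x => φ.f x * g.f1 x - g.f x * φ.f1 x) (Icc a b) := by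
    apply strictMonoOn_of_deriv_pos (convex_Icc a b)
    · exact ((φ.continuousOn.mul g.continuousOn1).sub (g.continuousOn.mul φ.continuousOn1)).mono
        hsub
    · intro x hx
      rw [interior_Icc] at hx
      have hx' : x ∈ Ioo 0 L := ⟨ha.trans_lt hx.1, hx.2.trans_le hb⟩
      have := ((φ.hasDerivAt hx').mul (g.hasDerivAt1 hx')).sub
        ((g.hasDerivAt hx').mul (φ.hasDerivAt1 hx'))
      have e : deriv (fun x => φ.f x * g.f1 x - g.f x * φ.f1 x) x =
          φ.f x * g.f2 x - g.f x * φ.f2 x := by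
        refine Eq.trans this.deriv ?_
        ring
      rw [e]
      exact h x hx
  have := hmono (left_mem_Icc.2 hab.le) (right_mem_Icc.2 hab.le) hab
  simp only [ga, gb, zero_mul, sub_zero] at this
  nlinarith [mul_nonneg (hφ a haI) hda, mul_nonneg (hφ b hbI) (neg_nonneg.2 hdb)]

/-- A pair of functions whose second derivatives are controlled linearly by the pair vanishes if
its Cauchy data vanish at one point. -/
theorem eq_zero_of_cauchy_data (w z : TwiceDiff L) {C : ℝ} (hC : 0 ≤ C)
    (hw : ∀ x ∈ Ioo 0 L, |w.f2 x| ≤ C * (|w.f x| + |z.f x|))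
    (hz : ∀ x ∈ Ioo 0 L, |z.f2 x| ≤ C * (|w.f x| + |z.f x|))
    {p : ℝ} (hp : p ∈ Icc 0 L) (w0 : w.f p = 0) (w1 : w.f1 p = 0) (z0 : z.f p = 0)
    (z1 : z.f1 p = 0) : ∀ x ∈ Icc 0 L, w.f x = 0 ∧ z.f x = 0 := by
  set E : ℝ → ℝ := fun x => w.f x ^ 2 + w.f1 x ^ 2 + z.f x ^ 2 + z.f1 x ^ 2 with hE
  set E' : ℝ → ℝ := fun x => 2 * (w.f x * w.f1 x) + 2 * (w.f1 x * w.f2 x) +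
    2 * (z.f x * z.f1 x) + 2 * (z.f1 x * z.f2 x) with hE'
  have hEc : ContinuousOn E (Icc 0 L) :=
    (((w.continuousOn.pow 2).add (w.continuousOn1.pow 2)).add (z.continuousOn.pow 2)).add
      (z.continuousOn1.pow 2)
  have hEd : ∀ x ∈ Ioo 0 L, HasDerivAt E (E' x) x := by
    intro x hx
    have := ((((w.hasDerivAt hx).pow 2).add ((w.hasDerivAt1 hx).pow 2)).add
      ((z.hasDerivAt hx).pow 2)).add ((z.hasDerivAt1 hx).pow 2)
    refine this.congr_deriv ?_
    simp only [hE']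
    push_cast
    ring
  set D : ℝ := 1 + 4 * C with hD
  have hbound : ∀ x ∈ Ioo 0 L, |E' x| ≤ D * E x := by
    intro x hx
    have key : ∀ a a1 a2 b : ℝ, |a2| ≤ C * (|a| + |b|) →
        |2 * (a1 * a2)| ≤ C * (2 * a1 ^ 2 + a ^ 2 + b ^ 2) := by
      intro a a1 a2 b h
      rw [abs_mul, abs_mul, abs_two]
      have h2 : |a1| * |a2| ≤ |a1| * (C * (|a| + |b|)) := by gcongr
      have h3 : 2 * (|a1| * (|a| + |b|)) ≤ 2 * a1 ^ 2 + a ^ 2 + b ^ 2 := by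
        rw [← sq_abs a1, ← sq_abs a, ← sq_abs b]
        nlinarith [sq_nonneg (|a1| - |a|), sq_nonneg (|a1| - |b|)]
      nlinarith [mul_le_mul_of_nonneg_left h3 hC]
    have key2 : ∀ a b : ℝ, |2 * (a * b)| ≤ a ^ 2 + b ^ 2 := by
      intro a b
      rw [abs_le]
      constructor <;> nlinarith [sq_nonneg (a - b), sq_nonneg (a + b)]
    have h1 := key2 (w.f x) (w.f1 x)
    have h2 := key2 (z.f x) (z.f1 x)
    have h3 := key (w.f x) (w.f1 x) (w.f2 x) (z.f x) (hw x hx)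
    have h4 := key (z.f x) (z.f1 x) (z.f2 x) (w.f x) (by rw [add_comm |z.f x|]; exact hz x hx)
    have h5 : |E' x| ≤ |2 * (w.f x * w.f1 x)| + |2 * (w.f1 x * w.f2 x)| +
        |2 * (z.f x * z.f1 x)| + |2 * (z.f1 x * z.f2 x)| := by
      refine (abs_add_le _ _).trans ?_
      gcongr
      refine (abs_add_le _ _).trans ?_
      gcongr
      exact abs_add_le _ _
    have h6 : 0 ≤ C * (w.f1 x ^ 2 + z.f1 x ^ 2 + w.f x ^ 2 + z.f x ^ 2) := by positivity
    have h7 : 0 ≤ C * (w.f x ^ 2 + z.f x ^ 2) := by positivity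
    simp only [hD, hE]
    nlinarith
  have hEp : E p = 0 := by simp [hE, w0, w1, z0, z1]
  have hanti : AntitoneOn (fun x => E x * exp (-D * x)) (Icc 0 L) := by
    apply antitoneOn_of_deriv_nonpos (convex_Icc 0 L)
    · exact hEc.mul (by fun_prop)
    · intro x hx
      rw [interior_Icc] at hx
      have hd := (hEd x hx).mul (((hasDerivAt_id x).const_mul (-D)).exp)
      exact (hd.differentiableAt).differentiableWithinAt
    · intro x hx
      rw [interior_Icc] at hx
      have hd := (hEd x hx).mul (((hasDerivAt_id x).const_mul (-D)).exp)
      refine (Eq.trans_le hd.deriv ?_)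
      have := (abs_le.1 (hbound x hx)).2
      have he := exp_pos (-D * x)
      simp only [id, mul_one]
      nlinarith
  have hmono : MonotoneOn (fun x => E x * exp (D * x)) (Icc 0 L) := by
    apply monotoneOn_of_deriv_nonneg (convex_Icc 0 L)
    · exact hEc.mul (by fun_prop)
    · intro x hx
      rw [interior_Icc] at hx
      have hd := (hEd x hx).mul (((hasDerivAt_id x).const_mul D).exp)
      exact (hd.differentiableAt).differentiableWithinAt
    · intro x hx
      rw [interior_Icc] at hx
      have hd := (hEd x hx).mul (((hasDerivAt_id x).const_mul D).exp)
      refine le_of_le_of_eq ?_ hd.deriv.symm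
      have := (abs_le.1 (hbound x hx)).1
      have he := exp_pos (D * x)
      simp only [id, mul_one]
      nlinarith
  have hE0 : ∀ x ∈ Icc 0 L, E x ≤ 0 := by
    intro x hx
    rcases le_total p x with h | h
    · have := hanti hp hx h
      simp only [hEp, zero_mul] at this
      exact nonpos_of_mul_nonpos_left this (exp_pos _)
    · have := hmono hx hp h
      simp only [hEp, zero_mul] at this
      exact nonpos_of_mul_nonpos_left this (exp_pos _)
  intro x hx
  have := hE0 x hx
  simp only [hE] at this
  constructor <;>
  · apply pow_eq_zero_iff (two_ne_zero) |>.1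
    nlinarith [sq_nonneg (w.f x), sq_nonneg (w.f1 x), sq_nonneg (z.f x), sq_nonneg (z.f1 x)]

end TwiceDiff

theorem exists_last_zero {w : ℝ → ℝ} {a y : ℝ} (hay : a ≤ y) (hw : ContinuousOn w (Icc a y))
    (ha : w a ≤ 0) (hy : 0 < w y) :
    ∃ c ∈ Ico a y, w c = 0 ∧ ∀ x ∈ Ioc c y, 0 < w x := by
  have hcl : IsClosed (Icc a y ∩ w ⁻¹' Iic 0) := hw.preimage_isClosed_of_isClosed isClosed_Icc
    isClosed_Iic
  have hcpt : IsCompact (Icc a y ∩ w ⁻¹' Iic 0) :=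
    isCompact_Icc.of_isClosed_subset hcl inter_subset_left
  obtain ⟨c, ⟨hc, hc0⟩, hmax⟩ := hcpt.exists_isGreatest ⟨a, left_mem_Icc.2 hay, ha⟩
  have hcy : c < y := lt_of_le_of_ne hc.2 (by rintro rfl; exact absurd hy (not_lt.2 hc0))
  have hpos : ∀ x ∈ Ioc c y, 0 < w x := by
    intro x hx
    by_contra h
    exact absurd (hmax ⟨⟨hc.1.trans hx.1.le, hx.2⟩, not_lt.1 h⟩) (not_le.2 hx.1)
  refine ⟨c, ⟨hc.1, hcy⟩, le_antisymm hc0 ?_, hpos⟩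
  obtain ⟨t, ht, ht0⟩ := intermediate_value_Icc hcy.le (hw.mono (Icc_subset_Icc_left hc.1))
    ⟨hc0, hy.le⟩
  rcases eq_or_lt_of_le ht.1 with h | h
  · rw [h, ht0]
  · exact absurd ht0 (hpos t ⟨h, ht.2⟩).ne'

theorem exists_first_zero {w : ℝ → ℝ} {y b : ℝ} (hyb : y ≤ b) (hw : ContinuousOn w (Icc y b))
    (hb : w b ≤ 0) (hy : 0 < w y) :
    ∃ c ∈ Ioc y b, w c = 0 ∧ ∀ x ∈ Ico y c, 0 < w x := by
  obtain ⟨c, hc, hc0, hpos⟩ := exists_last_zero (w := fun x => w (-x)) (neg_le_neg hyb)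
    (hw.comp continuousOn_neg fun x hx => ⟨by linarith [hx.2], by linarith [hx.1]⟩)
    (by simpa using hb) (by simpa using hy)
  refine ⟨-c, ⟨by linarith [hc.2], by linarith [hc.1]⟩, hc0, fun x hx => ?_⟩
  have := hpos (-x) ⟨by linarith [hx.2], by linarith [hx.1]⟩
  simpa using this

/-- On every interval between consecutive zeros of `f` where `f` is positive, `g` is somewhere
negative. -/
def Opposes (L : ℝ) (f g : ℝ → ℝ) : Prop :=
  ∀ a b, 0 ≤ a → a < b → b ≤ L → f a = 0 → f b = 0 → (∀ x ∈ Ioo a b, 0 < f x) →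
    ∃ x ∈ Ioo a b, g x < 0

/-- The interval `(b, b')` is a positive nodal interval of `z`, and `w` is nonpositive on the
initial part `[b, a]`, vanishing at `a`. -/
structure NodalState (L : ℝ) (w z : ℝ → ℝ) (b a b' : ℝ) : Prop where
  nonneg : 0 ≤ b
  le : b ≤ a
  lt : a < b'
  le_right : b' ≤ L
  left_zero : z b = 0
  right_zero : z b' = 0
  pos : ∀ x ∈ Ioo b b', 0 < z x
  nonpos : ∀ x ∈ Icc b a, w x ≤ 0
  mid_zero : w a = 0

/-- Each nodal state is followed by a rotated one further to the right. -/
theorem NodalState.next {L : ℝ} {w z : ℝ → ℝ} {b a b' : ℝ} (hs : NodalState L w z b a b')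
    (hw : ContinuousOn w (Icc 0 L)) (wL : w L = 0)
    (hzw : Opposes L z (fun x => -w x)) (hwz : Opposes L w z) :
    ∃ c c', NodalState L (fun x => -z x) w c b' c' := by
  obtain ⟨h0, hba, hab, hbL, zb, zb', zpos, wnp, wa⟩ := hs
  obtain ⟨y, hy, hwy⟩ := hzw b b' h0 (hba.trans_lt hab) hbL zb zb' zpos
  have hwy : 0 < w y := by simpa using hwy
  have hay : a < y := by
    by_contra h
    exact absurd (wnp y ⟨hy.1.le, not_lt.1 h⟩) (not_le.2 hwy)
  obtain ⟨c, hc, wc, hcpos⟩ := exists_last_zero hay.le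
    (hw.mono (Icc_subset_Icc (h0.trans hba) (hy.2.le.trans hbL))) wa.le hwy
  obtain ⟨c', hc', wc', hcpos'⟩ := exists_first_zero (hy.2.le.trans hbL)
    (hw.mono (Icc_subset_Icc_left (h0.trans hy.1.le))) wL.le hwy
  have hpos : ∀ x ∈ Ioo c c', 0 < w x := by
    intro x hx
    rcases le_total x y with h | h
    · exact hcpos x ⟨hx.1, h⟩
    · exact hcpos' x ⟨h, hx.2⟩
  have hc0 : 0 ≤ c := h0.trans (hba.trans hc.1)
  have hbc' : b' < c' := by
    by_contra h
    obtain ⟨x, hx, hzx⟩ := hwz c c' hc0 (hc.2.trans hc'.1) hc'.2 wc wc' hpos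
    exact absurd (zpos x ⟨(hba.trans hc.1).trans_lt hx.1, hx.2.trans_le (not_lt.1 h)⟩)
      (not_lt.2 hzx.le)
  refine ⟨c, c', hc0, (hc.2.trans hy.2).le, hbc', hc'.2, wc, wc', hpos, fun x hx => ?_,
    by simp [zb']⟩
  rcases eq_or_lt_of_le hx.2 with h | h
  · simp [h, zb']
  rcases eq_or_lt_of_le ((hba.trans hc.1).trans hx.1) with h2 | h2
  · simp [← h2, zb]
  · simpa using (zpos x ⟨h2, h⟩).le

/-- Under mutual opposition, a nodal state forces the zeros of both functions to accumulate. -/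
theorem NodalState.exists_accumulation {L : ℝ} {w z : ℝ → ℝ} {b a b' : ℝ}
    (hs : NodalState L w z b a b')
    (hw : ContinuousOn w (Icc 0 L)) (hz : ContinuousOn z (Icc 0 L)) (wL : w L = 0) (zL : z L = 0)
    (h1 : Opposes L w z) (h2 : Opposes L z (fun x => -w x))
    (h3 : Opposes L (fun x => -w x) (fun x => -z x)) (h4 : Opposes L (fun x => -z x) w) :
    ∃ p ∈ Icc 0 L, (∀ ε > 0, ∃ x ∈ Icc 0 L, p - ε < x ∧ x < p ∧ w x = 0) ∧
      (∀ ε > 0, ∃ x ∈ Icc 0 L, p - ε < x ∧ x < p ∧ z x = 0) := by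
  let S1 : Set ℝ := {a | ∃ b b', NodalState L w z b a b'}
  let S2 : Set ℝ := {a | ∃ b b', NodalState L (fun x => -z x) w b a b'}
  let S3 : Set ℝ := {a | ∃ b b', NodalState L (fun x => -w x) (fun x => -z x) b a b'}
  let S4 : Set ℝ := {a | ∃ b b', NodalState L z (fun x => -w x) b a b'}
  let S : Set ℝ := (S1 ∪ S3) ∪ (S2 ∪ S4)
  have n1 : ∀ a ∈ S1, ∃ a' ∈ S2, a < a' := by
    rintro a ⟨b, b', h⟩
    exact ⟨b', h.next hw wL h2 h1, h.lt⟩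
  have n2 : ∀ a ∈ S2, ∃ a' ∈ S3, a < a' := by
    rintro a ⟨b, b', h⟩
    exact ⟨b', h.next hz.neg (by simp [zL]) (by simpa using h1) h4, h.lt⟩
  have n3 : ∀ a ∈ S3, ∃ a' ∈ S4, a < a' := by
    rintro a ⟨b, b', h⟩
    have := h.next hw.neg (by simp [wL]) (by simpa using h4) h3
    simp only [neg_neg] at this
    exact ⟨b', this, h.lt⟩
  have n4 : ∀ a ∈ S4, ∃ a' ∈ S1, a < a' := by
    rintro a ⟨b, b', h⟩
    have := h.next hz zL h3 h2
    simp only [neg_neg] at this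
    exact ⟨b', this, h.lt⟩
  have z13 : ∀ a ∈ S1 ∪ S3, w a = 0 := by
    rintro a (⟨b, b', h⟩ | ⟨b, b', h⟩)
    · exact h.mid_zero
    · simpa using h.mid_zero
  have z24 : ∀ a ∈ S2 ∪ S4, z a = 0 := by
    rintro a (⟨b, b', h⟩ | ⟨b, b', h⟩)
    · simpa using h.mid_zero
    · exact h.mid_zero
  have n13 : ∀ a ∈ S1 ∪ S3, ∃ a' ∈ S2 ∪ S4, a < a' := by
    rintro a (h | h)
    · obtain ⟨a', h', hl⟩ := n1 a h
      exact ⟨a', Or.inl h', hl⟩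
    · obtain ⟨a', h', hl⟩ := n3 a h
      exact ⟨a', Or.inr h', hl⟩
  have n24 : ∀ a ∈ S2 ∪ S4, ∃ a' ∈ S1 ∪ S3, a < a' := by
    rintro a (h | h)
    · obtain ⟨a', h', hl⟩ := n2 a h
      exact ⟨a', Or.inr h', hl⟩
    · obtain ⟨a', h', hl⟩ := n4 a h
      exact ⟨a', Or.inl h', hl⟩
  have hI : ∀ a ∈ S, a ∈ Icc 0 L := by
    rintro a ((⟨b, b', h⟩ | ⟨b, b', h⟩) | (⟨b, b', h⟩ | ⟨b, b', h⟩)) <;>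
      exact ⟨h.nonneg.trans h.le, h.lt.le.trans h.le_right⟩
  have hne : S.Nonempty := ⟨a, Or.inl (Or.inl ⟨b, b', hs⟩)⟩
  have hbdd : BddAbove S := ⟨L, fun a ha => (hI a ha).2⟩
  have hlt : ∀ a ∈ S, a < sSup S := by
    rintro a (h | h)
    · obtain ⟨a', h', hl⟩ := n13 a h
      exact hl.trans_le (le_csSup hbdd (Or.inr h'))
    · obtain ⟨a', h', hl⟩ := n24 a h
      exact hl.trans_le (le_csSup hbdd (Or.inl h'))
  refine ⟨sSup S, ⟨?_, csSup_le hne fun a ha => (hI a ha).2⟩, fun ε hε => ?_, fun ε hε => ?_⟩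
  · obtain ⟨a, ha⟩ := hne
    exact (hI a ha).1.trans (hlt a ha).le
  · obtain ⟨a, ha, hlta⟩ := exists_lt_of_lt_csSup hne (sub_lt_self (sSup S) hε)
    rcases ha with h | h
    · exact ⟨a, hI a (Or.inl h), hlta, hlt a (Or.inl h), z13 a h⟩
    · obtain ⟨a', h', hl⟩ := n24 a h
      exact ⟨a', hI a' (Or.inl h'), hlta.trans hl, hlt a' (Or.inl h'), z13 a' h'⟩
  · obtain ⟨a, ha, hlta⟩ := exists_lt_of_lt_csSup hne (sub_lt_self (sSup S) hε)
    rcases ha with h | h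
    · obtain ⟨a', h', hl⟩ := n13 a h
      exact ⟨a', hI a' (Or.inr h'), hlta.trans hl, hlt a' (Or.inr h'), z24 a' h'⟩
    · exact ⟨a, hI a (Or.inr h), hlta, hlt a (Or.inr h), z24 a h⟩

namespace TwiceDiff

variable {L : ℝ}

/-- Both Cauchy data vanish at an accumulation point of zeros. -/
theorem cauchy_data_eq_zero (g : TwiceDiff L) {p : ℝ} (hp : p ∈ Icc 0 L)
    (h : ∀ ε > 0, ∃ x ∈ Icc 0 L, p - ε < x ∧ x < p ∧ g.f x = 0) : g.f p = 0 ∧ g.f1 p = 0 := by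
  have hfreq : ∃ᶠ x in 𝓝[Icc 0 L \ {p}] p, g.f x = 0 := by
    rw [(Metric.nhdsWithin_basis_ball (x := p) (s := Icc 0 L \ {p})).frequently_iff]
    intro ε hε
    obtain ⟨x, hx, h1, h2, h3⟩ := h ε hε
    refine ⟨x, ⟨?_, hx, h2.ne⟩, h3⟩
    rw [Metric.mem_ball, Real.dist_eq, abs_lt]
    constructor <;> linarith
  have h0 : g.f p = 0 := by
    have ht : Tendsto g.f (𝓝[Icc 0 L \ {p}] p) (𝓝 (g.f p)) :=
      ((g.continuousOn p hp).mono sdiff_subset)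
    exact isClosed_singleton.mem_of_frequently_of_tendsto (s := {(0 : ℝ)}) hfreq ht
  refine ⟨h0, ?_⟩
  have ht := hasDerivWithinAt_iff_tendsto_slope.1 (g.hasDeriv p hp)
  refine isClosed_singleton.mem_of_frequently_of_tendsto (s := {(0 : ℝ)}) (hfreq.mono ?_) ht
  intro x hx
  simp [slope_def_field, hx, h0]

/-- A function with positive initial slope has a first positive nodal interval. -/
theorem exists_first_nodal (g : TwiceDiff L) (hL : 0 < L) (g0 : g.f 0 = 0) (gL : g.f L = 0)
    (h : 0 < g.f1 0) : ∃ b ∈ Ioc 0 L, g.f b = 0 ∧ ∀ x ∈ Ioo 0 b, 0 < g.f x := by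
  have h0 : (0 : ℝ) ∈ Icc 0 L := left_mem_Icc.2 hL.le
  have ht := hasDerivWithinAt_iff_tendsto_slope.1 (g.hasDeriv 0 h0)
  have hev := ht.eventually (lt_mem_nhds h)
  rw [(Metric.nhdsWithin_basis_ball (x := (0 : ℝ)) (s := Icc 0 L \ {0})).eventually_iff] at hev
  obtain ⟨ε, hε, hev⟩ := hev
  have hpos : ∀ x, 0 < x → x < ε → x ≤ L → 0 < g.f x := by
    intro x hx hxe hxL
    have := hev (x := x) ⟨by simpa [abs_of_pos hx] using hxe, ⟨hx.le, hxL⟩, hx.ne'⟩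
    rw [slope_def_field, g0, sub_zero, sub_zero] at this
    exact (div_pos_iff_of_pos_right hx).1 this
  set y := min (ε / 2) L with hy
  have hy0 : 0 < y := lt_min (by positivity) hL
  have hye : y < ε := (min_le_left _ _).trans_lt (by linarith)
  have hyL : y ≤ L := min_le_right _ _
  obtain ⟨c, hc, gc, hcpos⟩ := exists_first_zero hyL
    (g.continuousOn.mono (Icc_subset_Icc_left hy0.le)) gL.le (hpos y hy0 hye hyL)
  refine ⟨c, ⟨hy0.trans hc.1, hc.2⟩, gc, fun x hx => ?_⟩
  rcases lt_or_ge x y with h' | h'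
  · exact hpos x hx.1 (h'.trans hye) (hx.2.le.trans hc.2)
  · exact hcpos x ⟨h', hx.2⟩

/-- A linear predator-prey type system in which both scalar operators possess positive strict
supersolutions has only the trivial solution under zero Dirichlet data. -/
theorem eq_zero_of_predator_prey (hL : 0 < L) {d C : ℝ} (hd : 0 < d) (w z φ ψ : TwiceDiff L)
    (p q c e : ℝ → ℝ)
    (hw : ∀ x ∈ Ioo 0 L, d * w.f2 x = p x * w.f x + c x * z.f x)
    (hz : ∀ x ∈ Ioo 0 L, d * z.f2 x = q x * z.f x - e x * w.f x)
    (hc : ∀ x ∈ Ioo 0 L, 0 ≤ c x) (he : ∀ x ∈ Ioo 0 L, 0 ≤ e x)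
    (bp : ∀ x ∈ Ioo 0 L, |p x| ≤ C) (bq : ∀ x ∈ Ioo 0 L, |q x| ≤ C)
    (bc : ∀ x ∈ Ioo 0 L, |c x| ≤ C) (be : ∀ x ∈ Ioo 0 L, |e x| ≤ C)
    (hφ : ∀ x ∈ Ioo 0 L, d * φ.f2 x < p x * φ.f x) (hψ : ∀ x ∈ Ioo 0 L, d * ψ.f2 x < q x * ψ.f x)
    (φn : ∀ x ∈ Icc 0 L, 0 ≤ φ.f x) (ψn : ∀ x ∈ Icc 0 L, 0 ≤ ψ.f x)
    (w0 : w.f 0 = 0) (wL : w.f L = 0) (z0 : z.f 0 = 0) (zL : z.f L = 0) :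
    ∀ x ∈ Icc 0 L, w.f x = 0 ∧ z.f x = 0 := by
  have opp : ∀ (g h χ : TwiceDiff L) (r s : ℝ → ℝ),
      (∀ x ∈ Ioo 0 L, d * g.f2 x = r x * g.f x + s x * h.f x) → (∀ x ∈ Ioo 0 L, 0 ≤ s x) →
      (∀ x ∈ Ioo 0 L, d * χ.f2 x < r x * χ.f x) → (∀ x ∈ Icc 0 L, 0 ≤ χ.f x) →
      Opposes L g.f h.f := by
    intro g h χ r s hg hs hχ χn a b ha hab hb ga gb hpos
    by_contra! hcon
    refine g.sturm_comparison χ ha hab hb ga gb hpos χn fun x hx => ?_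
    have hx' : x ∈ Ioo 0 L := ⟨ha.trans_lt hx.1, hx.2.trans_le hb⟩
    have h1 := hg x hx'
    have h2 := mul_lt_mul_of_pos_left (hχ x hx') (hpos x hx)
    have h3 := mul_nonneg (χn x (Ioo_subset_Icc_self hx')) (mul_nonneg (hs x hx') (hcon x hx))
    have h4 : d * (χ.f x * g.f2 x - g.f x * χ.f2 x) =
        χ.f x * (d * g.f2 x) - g.f x * (d * χ.f2 x) := by ring
    refine pos_of_mul_pos_right (a := d) ?_ hd.le
    rw [h4, h1]
    linarith
  have h1 : Opposes L w.f z.f := opp w z φ p c hw hc hφ φn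
  have h2 : Opposes L z.f (fun x => -w.f x) := opp z w.neg ψ q e
    (fun x hx => by rw [hz x hx]; simp only [neg]; ring) he hψ ψn
  have h3 : Opposes L (fun x => -w.f x) (fun x => -z.f x) := opp w.neg z.neg φ p c
    (fun x hx => by simp only [neg]; linear_combination -(hw x hx)) hc hφ φn
  have h4 : Opposes L (fun x => -z.f x) w.f := opp z.neg w ψ q e
    (fun x hx => by simp only [neg]; linear_combination -(hz x hx)) he hψ ψn
  have hC : 0 ≤ C := (abs_nonneg _).trans (bp (L / 2) ⟨by linarith, by linarith⟩)
  have unique : ∀ x ∈ Icc 0 L, w.f x = 0 → w.f1 x = 0 → z.f x = 0 → z.f1 x = 0 →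
      ∀ x ∈ Icc 0 L, w.f x = 0 ∧ z.f x = 0 := by
    intro x hx
    have bound : ∀ y r s a b : ℝ, d * y = r * a + s * b → |r| ≤ C → |s| ≤ C →
        |y| ≤ C / d * (|a| + |b|) := by
      intro y r s a b h hr hs
      rw [div_mul_eq_mul_div, le_div_iff₀ hd, mul_comm |y|, ← abs_of_pos hd, ← abs_mul, h,
        mul_add]
      refine (abs_add_le _ _).trans ?_
      rw [abs_mul, abs_mul]
      gcongr
    refine w.eq_zero_of_cauchy_data z (C := C / d) (by positivity)
      (fun x hx => bound _ _ _ _ _ (hw x hx) (bp x hx) (bc x hx))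
      (fun x hx => bound _ (-e x) (q x) _ _ ?_ (by rw [abs_neg]; exact be x hx) (bq x hx)) hx
    rw [hz x hx]
    ring
  have fin : (∃ p ∈ Icc 0 L, (∀ ε > 0, ∃ x ∈ Icc 0 L, p - ε < x ∧ x < p ∧ w.f x = 0) ∧
      (∀ ε > 0, ∃ x ∈ Icc 0 L, p - ε < x ∧ x < p ∧ z.f x = 0)) →
      ∀ x ∈ Icc 0 L, w.f x = 0 ∧ z.f x = 0 := by
    rintro ⟨p, hp, hpw, hpz⟩
    obtain ⟨a, b⟩ := w.cauchy_data_eq_zero hp hpw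
    obtain ⟨a', b'⟩ := z.cauchy_data_eq_zero hp hpz
    exact unique p hp a b a' b'
  have start : ∀ g h : TwiceDiff L, g.f 0 = 0 → h.f 0 = 0 → h.f L = 0 → 0 < h.f1 0 →
      ∃ b, NodalState L g.f h.f 0 0 b := by
    intro g h g0 h0 hL' hh
    obtain ⟨b, hb, hb0, hpos⟩ := h.exists_first_nodal hL h0 hL' hh
    exact ⟨b, le_rfl, le_rfl, hb.1, hb.2, h0, hb0, hpos,
      fun x hx => by rw [Icc_self, mem_singleton_iff] at hx; rw [hx, g0], g0⟩
  rcases lt_trichotomy (z.f1 0) 0 with hz1 | hz1 | hz1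
  · obtain ⟨b, hb⟩ := start w.neg z.neg (by simp [neg, w0]) (by simp [neg, z0])
      (by simp [neg, zL]) (by simpa [neg] using hz1)
    have := hb.exists_accumulation w.continuousOn.neg z.continuousOn.neg (by simp [neg, wL])
      (by simp [neg, zL]) h3 (by simpa [neg] using h4) (by simpa [neg] using h1)
      (by simpa [neg] using h2)
    exact fin (by simpa [neg] using this)
  · rcases lt_trichotomy (w.f1 0) 0 with hw1 | hw1 | hw1
    · obtain ⟨b, hb⟩ := start z w.neg z0 (by simp [neg, w0])
        (by simp [neg, wL]) (by simpa [neg] using hw1)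
      have := hb.exists_accumulation z.continuousOn w.continuousOn.neg zL
        (by simp [neg, wL]) h2 h3 (by simpa [neg] using h4) (by simpa [neg] using h1)
      obtain ⟨p, hp, a, b⟩ := this
      exact fin ⟨p, hp, by simpa [neg] using b, a⟩
    · exact unique 0 (left_mem_Icc.2 hL.le) w0 hw1 z0 hz1
    · obtain ⟨b, hb⟩ := start z.neg w (by simp [neg, z0]) w0 wL hw1
      have := hb.exists_accumulation z.continuousOn.neg w.continuousOn (by simp [neg, zL])
        wL h4 (by simpa [neg] using h1) (by simpa [neg] using h2) h3
      obtain ⟨p, hp, a, b⟩ := this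
      exact fin ⟨p, hp, b, by simpa [neg] using a⟩
  · obtain ⟨b, hb⟩ := start w z w0 z0 zL hz1
    exact fin (hb.exists_accumulation w.continuousOn z.continuousOn wL zL h1 h2 h3 h4)

end TwiceDiff

namespace TwiceDiff

variable {L : ℝ}

theorem deriv_deriv_eq (g : TwiceDiff L) {x : ℝ} (hx : x ∈ Ioo 0 L) :
    deriv (deriv g.f) x = g.f2 x := by
  have h : deriv g.f =ᶠ[𝓝 x] g.f1 := by
    filter_upwards [Ioo_mem_nhds hx.1 hx.2] with y hy using (g.hasDerivAt hy).deriv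
  rw [h.deriv_eq, (g.hasDerivAt1 hx).deriv]

theorem second_deriv_nonpos_of_max (g : TwiceDiff L) {x : ℝ} (hx : x ∈ Ioo 0 L)
    (h : ∀ y ∈ Icc 0 L, g.f y ≤ g.f x) : g.f2 x ≤ 0 := by
  by_contra! hpos
  have hmax : IsLocalMax g.f x := by
    filter_upwards [Icc_mem_nhds hx.1 hx.2] with y hy using h y hy
  have hmin : IsLocalMin g.f x := by
    apply isLocalMin_of_deriv_deriv_pos
    · rw [g.deriv_deriv_eq hx]
      exact hpos
    · exact hmax.deriv_eq_zero
    · exact (g.hasDerivAt hx).continuousAt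
  have hconst : g.f =ᶠ[𝓝 x] fun _ => g.f x := by
    filter_upwards [hmax, hmin] with y h1 h2 using le_antisymm h1 h2
  have h2 : deriv g.f =ᶠ[𝓝 x] fun _ => 0 := by
    refine hconst.deriv.trans (Eventually.of_forall fun y => by simp)
  have := h2.deriv_eq
  rw [g.deriv_deriv_eq hx, deriv_const] at this
  exact hpos.ne' this

theorem second_deriv_nonneg_of_min (g : TwiceDiff L) {x : ℝ} (hx : x ∈ Ioo 0 L)
    (h : ∀ y ∈ Icc 0 L, g.f x ≤ g.f y) : 0 ≤ g.f2 x := by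
  have := g.neg.second_deriv_nonpos_of_max hx fun y hy => neg_le_neg (h y hy)
  simpa [neg] using this

/-- A function that is strictly convex wherever it exceeds the level `K` stays below `K`. -/
theorem le_of_convex_above (g : TwiceDiff L) (hL : 0 < L) {K : ℝ} (h0 : g.f 0 ≤ K)
    (h1 : g.f L ≤ K) (h : ∀ x ∈ Ioo 0 L, K < g.f x → 0 < g.f2 x) :
    ∀ x ∈ Icc 0 L, g.f x ≤ K := by
  obtain ⟨y, hy, hmax⟩ := isCompact_Icc.exists_isMaxOn (nonempty_Icc.2 hL.le) g.continuousOn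
  intro x hx
  refine (hmax hx).trans ?_
  by_contra! hK
  have hy0 : y ≠ 0 := by rintro rfl; linarith
  have hyL : y ≠ L := by rintro rfl; linarith
  have hy' : y ∈ Ioo 0 L := ⟨lt_of_le_of_ne hy.1 hy0.symm, lt_of_le_of_ne hy.2 hyL⟩
  exact absurd (g.second_deriv_nonpos_of_max hy' fun z hz => hmax hz) (not_le.2 (h y hy' hK))

/-- A function with zero boundary values that is strictly concave wherever it is nonpositive is
positive. -/
theorem pos_of_concave_below (g : TwiceDiff L) (hL : 0 < L) (h0 : g.f 0 = 0)
    (h1 : g.f L = 0) (h : ∀ x ∈ Ioo 0 L, g.f x ≤ 0 → g.f2 x < 0) :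
    ∀ x ∈ Ioo 0 L, 0 < g.f x := by
  have hnn := g.neg.le_of_convex_above hL (K := 0) (by simp [neg, h0]) (by simp [neg, h1])
    (fun x hx hpos => by
      have := h x hx (by simpa [neg] using hpos.le)
      simpa [neg] using this)
  intro x hx
  by_contra! hx0
  have := g.second_deriv_nonneg_of_min hx fun y hy => by
    have := hnn y hy
    simp only [neg] at this
    linarith
  exact absurd this (not_le.2 (h x hx hx0))

theorem nonneg_of_pos (g : TwiceDiff L) (h0 : g.f 0 = 0) (h1 : g.f L = 0)
    (h : ∀ x ∈ Ioo 0 L, 0 ≤ g.f x) : ∀ x ∈ Icc 0 L, 0 ≤ g.f x := by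
  intro x hx
  rcases eq_or_lt_of_le hx.1 with h2 | h2
  · rw [← h2, h0]
  rcases eq_or_lt_of_le hx.2 with h3 | h3
  · rw [h3, h1]
  exact h x ⟨h2, h3⟩

/-- The function `sin (π x / L)`. -/
noncomputable def sine (L : ℝ) : TwiceDiff L where
  f x := sin (π / L * x)
  f1 x := π / L * cos (π / L * x)
  f2 x := -((π / L) ^ 2 * sin (π / L * x))
  hasDeriv x _ := by
    have := ((hasDerivAt_id x).const_mul (π / L)).sin
    refine (this.congr_deriv ?_).hasDerivWithinAt
    simp only [id]
    ring
  hasDeriv1 x _ := by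
    have := (((hasDerivAt_id x).const_mul (π / L)).cos).const_mul (π / L)
    refine (this.congr_deriv ?_).hasDerivWithinAt
    simp only [id]
    ring

theorem sine_zero : (sine L).f 0 = 0 := by simp [sine]

theorem sine_right (hL : 0 < L) : (sine L).f L = 0 := by
  simp [sine, div_mul_cancel₀ π hL.ne']

theorem sine_pos (hL : 0 < L) {x : ℝ} (hx : x ∈ Ioo 0 L) : 0 < (sine L).f x := by
  apply sin_pos_of_pos_of_lt_pi
  · have := hx.1
    positivity
  · rw [div_mul_eq_mul_div, div_lt_iff₀ hL]
    exact mul_lt_mul_of_pos_left hx.2 pi_pos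

theorem sine_nonneg (hL : 0 < L) : ∀ x ∈ Icc 0 L, 0 ≤ (sine L).f x :=
  (sine L).nonneg_of_pos sine_zero (sine_right hL) fun _ hx => (sine_pos hL hx).le

/-- The bundled version of a function that is `C²` on `[0, L]`. -/
noncomputable def ofContDiffOn (hL : 0 < L) (g : ℝ → ℝ) (hg : ContDiffOn ℝ 2 g (Icc 0 L)) :
    TwiceDiff L where
  f := g
  f1 := derivWithin g (Icc 0 L)
  f2 := derivWithin (derivWithin g (Icc 0 L)) (Icc 0 L)
  hasDeriv x hx := ((hg.differentiableOn (by norm_num)) x hx).hasDerivWithinAt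
  hasDeriv1 x hx := by
    have : ContDiffOn ℝ 1 (derivWithin g (Icc 0 L)) (Icc 0 L) :=
      hg.derivWithin (uniqueDiffOn_Icc hL) (by norm_num)
    exact ((this.differentiableOn (by norm_num)) x hx).hasDerivWithinAt

end TwiceDiff

/-- A solution of the steady-state system with growth profile `m` under zero Dirichlet data. -/
structure IsSol (L d τ κ A B : ℝ) (m : ℝ → ℝ) (u v : TwiceDiff L) : Prop where
  eqn_u : ∀ x ∈ Ioo 0 L, -(d * u.f2 x) = κ * u.f x * (m x - A * u.f x - B * v.f x)
  eqn_v : ∀ x ∈ Ioo 0 L, -(d * v.f2 x) = (1 / τ) * (u.f x - v.f x)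
  u_zero : u.f 0 = 0
  u_right : u.f L = 0
  v_zero : v.f 0 = 0
  v_right : v.f L = 0

theorem IsSol.of_isNonnegLogSol {L d τ κ A B : ℝ} (hL : 0 < L) {u v : ℝ → ℝ}
    (h : IsNonnegLogSol L d τ κ A B u v) :
    IsSol L d τ κ A B (fun _ => 1) (.ofContDiffOn hL u h.1) (.ofContDiffOn hL v h.2.1) := by
  obtain ⟨hu, hv, -, -, eu, ev, u0, uL, v0, vL⟩ := h
  refine ⟨fun x hx => ?_, fun x hx => ?_, u0, uL, v0, vL⟩
  · rw [← TwiceDiff.deriv_deriv_eq _ hx]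
    exact eu x hx
  · rw [← TwiceDiff.deriv_deriv_eq _ hx]
    exact ev x hx

namespace IsSol

variable {L d τ κ A B : ℝ} {m : ℝ → ℝ} {u v : TwiceDiff L}

theorem u_le (h : IsSol L d τ κ A B m u v) (hL : 0 < L) (hd : 0 < d) (hκ : 0 < κ) (hA : 0 < A)
    (hB : 0 < B) (hm : ∀ x ∈ Ioo 0 L, m x ≤ 1) (hv : ∀ x ∈ Ioo 0 L, 0 ≤ v.f x) :
    ∀ x ∈ Icc 0 L, u.f x ≤ 1 / A := by
  have hA' : 0 < 1 / A := by positivity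
  refine u.le_of_convex_above hL (by rw [h.u_zero]; exact hA'.le) (by rw [h.u_right]; exact hA'.le)
    fun x hx hlt => ?_
  have h1 := h.eqn_u x hx
  have h2 : 1 < A * u.f x := by rwa [div_lt_iff₀' hA] at hlt
  have h3 : m x - A * u.f x - B * v.f x < 0 := by
    nlinarith [hm x hx, mul_nonneg hB.le (hv x hx)]
  have h4 : 0 < κ * u.f x := mul_pos hκ (hA'.trans hlt)
  refine pos_of_mul_pos_right (a := d) ?_ hd.le
  nlinarith

theorem v_le (h : IsSol L d τ κ A B m u v) (hL : 0 < L) (hd : 0 < d) (hτ : 0 < τ) {K : ℝ}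
    (hK : 0 ≤ K) (hu : ∀ x ∈ Ioo 0 L, u.f x ≤ K) : ∀ x ∈ Icc 0 L, v.f x ≤ K := by
  refine v.le_of_convex_above hL (by rwa [h.v_zero]) (by rwa [h.v_right]) fun x hx hlt => ?_
  have h1 := h.eqn_v x hx
  have h2 : 0 < 1 / τ := by positivity
  refine pos_of_mul_pos_right (a := d) ?_ hd.le
  nlinarith [hu x hx]

theorem v_pos (h : IsSol L d τ κ A B m u v) (hL : 0 < L) (hd : 0 < d) (hτ : 0 < τ)
    (hu : ∀ x ∈ Ioo 0 L, 0 < u.f x) : ∀ x ∈ Ioo 0 L, 0 < v.f x := by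
  refine v.pos_of_concave_below hL h.v_zero h.v_right fun x hx hle => ?_
  have h1 := h.eqn_v x hx
  have h2 : 0 < 1 / τ := by positivity
  have h3 : 0 < d * -v.f2 x := by nlinarith [hu x hx]
  have := pos_of_mul_pos_right h3 hd.le
  linarith

/-- No positive solution for large diffusion. -/
theorem false_of_large_diffusion (h : IsSol L d τ κ A B m u v) (hL : 0 < L) (hκ : 0 < κ)
    (hA : 0 < A) (hB : 0 < B) (hd : 0 < d) (hdκ : κ ≤ d * (π / L) ^ 2)
    (hm : ∀ x ∈ Ioo 0 L, m x ≤ 1) (hu : ∀ x ∈ Ioo 0 L, 0 < u.f x)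
    (hv : ∀ x ∈ Ioo 0 L, 0 < v.f x) : False := by
  refine u.sturm_comparison (.sine L) le_rfl hL le_rfl h.u_zero h.u_right hu
    (TwiceDiff.sine_nonneg hL) fun x hx => ?_
  have h1 := h.eqn_u x hx
  have hs := TwiceDiff.sine_pos hL hx
  refine pos_of_mul_pos_right (a := d) ?_ hd.le
  have e : (TwiceDiff.sine L).f2 x = -((π / L) ^ 2 * (TwiceDiff.sine L).f x) := rfl
  have h2 : d * ((TwiceDiff.sine L).f x * u.f2 x - u.f x * (TwiceDiff.sine L).f2 x) =
      (TwiceDiff.sine L).f x * u.f x * (d * (π / L) ^ 2 - κ * (m x - A * u.f x - B * v.f x)) := by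
    rw [e]
    linear_combination -(TwiceDiff.sine L).f x * h1
  rw [h2]
  refine mul_pos (mul_pos hs (hu x hx)) ?_
  have := mul_pos hκ (add_pos (mul_pos hA (hu x hx)) (mul_pos hB (hv x hx)))
  nlinarith [hm x hx]

/-- A positive solution cannot be uniformly small when the growth profile exceeds the principal
eigenvalue. -/
theorem false_of_small (h : IsSol L d τ κ A B m u v) (hL : 0 < L) (hd : 0 < d)
    (hu : ∀ x ∈ Ioo 0 L, 0 < u.f x)
    (hsmall : ∀ x ∈ Ioo 0 L, d * (π / L) ^ 2 < κ * (m x - A * u.f x - B * v.f x)) : False := by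
  refine (TwiceDiff.sine L).sturm_comparison u le_rfl hL le_rfl TwiceDiff.sine_zero
    (TwiceDiff.sine_right hL) (fun x hx => TwiceDiff.sine_pos hL hx)
    (u.nonneg_of_pos h.u_zero h.u_right fun x hx => (hu x hx).le) fun x hx => ?_
  have h1 := h.eqn_u x hx
  have hs := TwiceDiff.sine_pos hL hx
  refine pos_of_mul_pos_right (a := d) ?_ hd.le
  have e : (TwiceDiff.sine L).f2 x = -((π / L) ^ 2 * (TwiceDiff.sine L).f x) := rfl
  have h2 : d * (u.f x * (TwiceDiff.sine L).f2 x - (TwiceDiff.sine L).f x * u.f2 x) =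
      (TwiceDiff.sine L).f x * u.f x * (κ * (m x - A * u.f x - B * v.f x) - d * (π / L) ^ 2) := by
    rw [e]
    linear_combination (TwiceDiff.sine L).f x * h1
  rw [h2]
  exact mul_pos (mul_pos hs (hu x hx)) (sub_pos.2 (hsmall x hx))

/-- The system satisfied by differences of solutions, and by solutions of the linearization, is
nondegenerate at a positive solution. -/
theorem linear_trivial (h : IsSol L d τ κ A B m u v) (hL : 0 < L) (hd : 0 < d) (hτ : 0 < τ)
    (hκ : 0 < κ) (hA : 0 < A) (hB : 0 < B) (hm : ContinuousOn m (Icc 0 L))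
    (hu : ∀ x ∈ Ioo 0 L, 0 < u.f x) (r : ℝ → ℝ) (hr : ContinuousOn r (Icc 0 L))
    (hrpos : ∀ x ∈ Ioo 0 L, 0 < r x) (w z : TwiceDiff L)
    (hw : ∀ x ∈ Ioo 0 L, d * w.f2 x =
      (κ * A * r x - κ * (m x - A * u.f x - B * v.f x)) * w.f x + κ * B * r x * z.f x)
    (hz : ∀ x ∈ Ioo 0 L, d * z.f2 x = 1 / τ * z.f x - 1 / τ * w.f x)
    (w0 : w.f 0 = 0) (wL : w.f L = 0) (z0 : z.f 0 = 0) (zL : z.f L = 0) :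
    ∀ x ∈ Icc 0 L, w.f x = 0 ∧ z.f x = 0 := by
  have hcu := u.continuousOn
  have hcv := v.continuousOn
  have hvpos := h.v_pos hL hd hτ hu
  obtain ⟨C1, h1⟩ := isCompact_Icc.exists_bound_of_continuousOn
    (f := fun x => κ * A * r x - κ * (m x - A * u.f x - B * v.f x)) (s := Icc 0 L) (by fun_prop)
  obtain ⟨C2, h2⟩ := isCompact_Icc.exists_bound_of_continuousOn
    (f := fun x => κ * B * r x) (s := Icc 0 L) (by fun_prop)
  refine TwiceDiff.eq_zero_of_predator_prey hL (C := max (max C1 C2) |1 / τ|) hd w z u v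
    _ (fun _ => 1 / τ) _ (fun _ => 1 / τ) hw hz (fun x hx => ?_) (fun x hx => by positivity)
    (fun x hx => ((h1 x (Ioo_subset_Icc_self hx)).trans (le_max_left _ _)).trans (le_max_left _ _))
    (fun x hx => le_max_right _ _)
    (fun x hx => ((h2 x (Ioo_subset_Icc_self hx)).trans (le_max_right _ _)).trans (le_max_left _ _))
    (fun x hx => le_max_right _ _) (fun x hx => ?_) (fun x hx => ?_)
    (u.nonneg_of_pos h.u_zero h.u_right fun x hx => (hu x hx).le)
    (v.nonneg_of_pos h.v_zero h.v_right fun x hx => (hvpos x hx).le) w0 wL z0 zL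
  · have := hrpos x hx
    positivity
  · have h3 := h.eqn_u x hx
    have : 0 < κ * A * r x * u.f x := by
      have := hrpos x hx
      have := hu x hx
      positivity
    nlinarith
  · have h3 := h.eqn_v x hx
    have : 0 < 1 / τ * u.f x := by
      have := hu x hx
      positivity
    nlinarith

/-- Uniqueness of the positive solution. -/
theorem unique (h : IsSol L d τ κ A B m u v) {u' v' : TwiceDiff L}
    (h' : IsSol L d τ κ A B m u' v') (hL : 0 < L) (hd : 0 < d) (hτ : 0 < τ)
    (hκ : 0 < κ) (hA : 0 < A) (hB : 0 < B) (hm : ContinuousOn m (Icc 0 L))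
    (hu : ∀ x ∈ Ioo 0 L, 0 < u.f x) (hu' : ∀ x ∈ Ioo 0 L, 0 < u'.f x) :
    ∀ x ∈ Icc 0 L, u'.f x = u.f x ∧ v'.f x = v.f x := by
  have := h.linear_trivial hL hd hτ hκ hA hB hm hu u'.f u'.continuousOn hu' (u'.sub u) (v'.sub v)
    (fun x hx => by
      simp only [TwiceDiff.sub]
      linear_combination -(h'.eqn_u x hx) + h.eqn_u x hx)
    (fun x hx => by
      simp only [TwiceDiff.sub]
      linear_combination -(h'.eqn_v x hx) + h.eqn_v x hx)
    (by simp [TwiceDiff.sub, h.u_zero, h'.u_zero]) (by simp [TwiceDiff.sub, h.u_right, h'.u_right])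
    (by simp [TwiceDiff.sub, h.v_zero, h'.v_zero]) (by simp [TwiceDiff.sub, h.v_right, h'.v_right])
  intro x hx
  obtain ⟨h1, h2⟩ := this x hx
  exact ⟨sub_eq_zero.1 h1, sub_eq_zero.1 h2⟩

end IsSol

section Volterra

variable {L : ℝ} (hL : 0 ≤ L)

theorem continuous_extend (g : C(Icc (0 : ℝ) L, ℝ)) : Continuous (IccExtend hL g) :=
  g.continuous.Icc_extend'

theorem hasDerivAt_primitive (g : C(Icc (0 : ℝ) L, ℝ)) (x : ℝ) :
    HasDerivAt (fun y => ∫ t in (0 : ℝ)..y, IccExtend hL g t) (IccExtend hL g x) x :=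
  ((continuous_extend hL g).integral_hasStrictDerivAt 0 x).hasDerivAt

theorem abs_extend_le (g : C(Icc (0 : ℝ) L, ℝ)) (x : ℝ) : ‖IccExtend hL g x‖ ≤ ‖g‖ :=
  g.norm_coe_le_norm _

/-- The Volterra operator `g ↦ ∫₀ˣ g` on continuous functions. -/
noncomputable def volterra : C(Icc (0 : ℝ) L, ℝ) →L[ℝ] C(Icc (0 : ℝ) L, ℝ) :=
  LinearMap.mkContinuous
    { toFun := fun g => ⟨fun x => ∫ t in (0 : ℝ)..x, IccExtend hL g t,
        (continuous_iff_continuousAt.2 fun x =>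
          (hasDerivAt_primitive hL g x).continuousAt).comp continuous_subtype_val⟩
      map_add' := by
        intro g h
        ext x
        exact intervalIntegral.integral_add ((continuous_extend hL g).intervalIntegrable _ _)
          ((continuous_extend hL h).intervalIntegrable _ _)
      map_smul' := by
        intro c g
        ext x
        exact intervalIntegral.integral_smul c _ } L (by
    intro g
    rw [ContinuousMap.norm_le _ (by positivity)]
    intro x
    refine (intervalIntegral.norm_integral_le_of_norm_le_const (C := ‖g‖)
      fun t _ => abs_extend_le hL g t).trans ?_
    rw [sub_zero, abs_of_nonneg x.2.1, mul_comm]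
    exact mul_le_mul_of_nonneg_right x.2.2 (norm_nonneg g))

theorem volterra_apply (g : C(Icc (0 : ℝ) L, ℝ)) (x : Icc (0 : ℝ) L) :
    volterra hL g x = ∫ t in (0 : ℝ)..x, IccExtend hL g t := rfl

theorem isCompactOperator_volterra : IsCompactOperator (volterra hL) := by
  let e := ContinuousMap.linearIsometryBoundedOfCompact (Icc (0 : ℝ) L) ℝ ℝ
  let V : C(Icc (0 : ℝ) L, ℝ) →L[ℝ] BoundedContinuousFunction (Icc (0 : ℝ) L) ℝ :=
    (e.toContinuousLinearEquiv :
      C(Icc (0 : ℝ) L, ℝ) →L[ℝ] BoundedContinuousFunction (Icc (0 : ℝ) L) ℝ) ∘L volterra hL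
  have hV : IsCompactOperator V := by
    refine (isCompactOperator_iff_isCompact_closure_image_closedBall
      (V : C(Icc (0 : ℝ) L, ℝ) →ₗ[ℝ] BoundedContinuousFunction (Icc (0 : ℝ) L) ℝ) one_pos).2 ?_
    refine BoundedContinuousFunction.arzela_ascoli (Metric.closedBall 0 (‖V‖ * 1))
      (isCompact_closedBall _ _) _ ?_ ?_
    · rintro _ x ⟨g, hg, rfl⟩
      rw [mem_closedBall_zero_iff] at hg ⊢
      exact ((V g).norm_coe_le_norm x).trans (V.le_of_opNorm_le_of_le le_rfl hg)
    · refine Metric.equicontinuous_of_continuity_modulus (fun r => r) tendsto_id _ ?_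
      rintro x y ⟨_, g, hg, rfl⟩
      rw [mem_closedBall_zero_iff] at hg
      have h1 : ∀ z, (V g) z = ∫ t in (0 : ℝ)..z, IccExtend hL g t := fun z => rfl
      change dist ((V g) x) ((V g) y) ≤ dist x y
      rw [h1, h1, dist_comm x y, Real.dist_eq, intervalIntegral.integral_interval_sub_left
        ((continuous_extend hL g).intervalIntegrable _ _)
        ((continuous_extend hL g).intervalIntegrable _ _)]
      refine (intervalIntegral.norm_integral_le_of_norm_le_const (C := 1)
        fun t _ => (abs_extend_le hL g t).trans hg).trans ?_
      rw [one_mul, dist_comm]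
      exact le_rfl
  have h := hV.clm_comp (e.symm.toContinuousLinearEquiv :
    BoundedContinuousFunction (Icc (0 : ℝ) L) ℝ →L[ℝ] C(Icc (0 : ℝ) L, ℝ))
  have h' : (volterra hL : C(Icc (0 : ℝ) L, ℝ) → C(Icc (0 : ℝ) L, ℝ)) =
      (e.symm.toContinuousLinearEquiv :
        BoundedContinuousFunction (Icc (0 : ℝ) L) ℝ →L[ℝ] C(Icc (0 : ℝ) L, ℝ)) ∘ V := by
    funext g
    simp [V]
  rw [h']
  exact h

/-- The linear function `x / L`. -/
noncomputable def ramp (L : ℝ) : C(Icc (0 : ℝ) L, ℝ) := ⟨fun x => x / L, by fun_prop⟩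

/-- The Green operator of `-d ∂²` on `(0, L)` with zero Dirichlet data. -/
noncomputable def green (d : ℝ) : C(Icc (0 : ℝ) L, ℝ) →L[ℝ] C(Icc (0 : ℝ) L, ℝ) :=
  (d⁻¹ • ((ContinuousMap.evalCLM ℝ ⟨L, right_mem_Icc.2 hL⟩ ∘L volterra hL).smulRight (ramp L) -
    volterra hL)) ∘L volterra hL

/-- The derivative of the Green operator. -/
noncomputable def greenDeriv (d : ℝ) : C(Icc (0 : ℝ) L, ℝ) →L[ℝ] C(Icc (0 : ℝ) L, ℝ) :=
  d⁻¹ • ((ContinuousMap.evalCLM ℝ ⟨L, right_mem_Icc.2 hL⟩ ∘L volterra hL ∘L volterra hL).smulRight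
    (ContinuousMap.const _ L⁻¹) - volterra hL)

theorem isCompactOperator_green (d : ℝ) : IsCompactOperator (green hL d) :=
  (isCompactOperator_volterra hL).clm_comp (d⁻¹ • ((ContinuousMap.evalCLM ℝ
    ⟨L, right_mem_Icc.2 hL⟩ ∘L volterra hL).smulRight (ramp L) - volterra hL))

/-- The image of a continuous function under the Green operator, with its derivatives. -/
noncomputable def greenFun (d : ℝ) (g : C(Icc (0 : ℝ) L, ℝ)) : TwiceDiff L where
  f x := d⁻¹ * ((∫ t in (0 : ℝ)..L, IccExtend hL (volterra hL g) t) * (x / L) -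
    ∫ t in (0 : ℝ)..x, IccExtend hL (volterra hL g) t)
  f1 x := d⁻¹ * ((∫ t in (0 : ℝ)..L, IccExtend hL (volterra hL g) t) * L⁻¹ -
    IccExtend hL (volterra hL g) x)
  f2 x := -(d⁻¹ * IccExtend hL g x)
  hasDeriv x _ := by
    have h1 := (((hasDerivAt_id x).div_const L).const_mul
      (∫ t in (0 : ℝ)..L, IccExtend hL (volterra hL g) t)).sub
      (hasDerivAt_primitive hL (volterra hL g) x)
    refine ((h1.const_mul d⁻¹).congr_deriv ?_).hasDerivWithinAt
    rw [one_div]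
  hasDeriv1 x hx := by
    have h1 : HasDerivWithinAt (IccExtend hL (volterra hL g)) (IccExtend hL g x) (Icc 0 L) x := by
      refine (hasDerivAt_primitive hL g x).hasDerivWithinAt.congr (fun y hy => ?_) ?_
      · rw [IccExtend_of_mem hL _ hy, volterra_apply]
      · rw [IccExtend_of_mem hL _ hx, volterra_apply]
    refine ((h1.const_sub ((∫ t in (0 : ℝ)..L, IccExtend hL (volterra hL g) t) * L⁻¹)).const_mul
      d⁻¹).congr_deriv ?_
    ring

theorem greenFun_f (d : ℝ) (g : C(Icc (0 : ℝ) L, ℝ)) {x : ℝ} (hx : x ∈ Icc 0 L) :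
    (greenFun hL d g).f x = green hL d g ⟨x, hx⟩ := rfl

theorem greenFun_f1 (d : ℝ) (g : C(Icc (0 : ℝ) L, ℝ)) {x : ℝ} (hx : x ∈ Icc 0 L) :
    (greenFun hL d g).f1 x = greenDeriv hL d g ⟨x, hx⟩ := by
  simp only [greenFun, IccExtend_of_mem hL _ hx]
  rfl

theorem greenFun_f2 {d : ℝ} (hd : d ≠ 0) (g : C(Icc (0 : ℝ) L, ℝ)) {x : ℝ} (hx : x ∈ Icc 0 L) :
    -(d * (greenFun hL d g).f2 x) = g ⟨x, hx⟩ := by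
  simp only [greenFun, IccExtend_of_mem hL _ hx]
  field_simp

theorem greenFun_zero (d : ℝ) (g : C(Icc (0 : ℝ) L, ℝ)) : (greenFun hL d g).f 0 = 0 := by
  simp [greenFun]

theorem greenFun_right (hL' : 0 < L) (d : ℝ) (g : C(Icc (0 : ℝ) L, ℝ)) :
    (greenFun hL d g).f L = 0 := by
  simp [greenFun, div_self hL'.ne']

theorem contDiffOn_greenFun (hL' : 0 < L) (d : ℝ) (g : C(Icc (0 : ℝ) L, ℝ)) :
    ContDiffOn ℝ 2 (greenFun hL d g).f (Icc 0 L) := by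
  have hU := uniqueDiffOn_Icc hL'
  set G := greenFun hL d g with hG
  have h1 : ∀ x ∈ Icc 0 L, derivWithin G.f (Icc 0 L) x = G.f1 x :=
    fun x hx => (G.hasDeriv x hx).derivWithin (hU x hx)
  have h2 : ∀ x ∈ Icc 0 L, derivWithin G.f1 (Icc 0 L) x = G.f2 x :=
    fun x hx => (G.hasDeriv1 x hx).derivWithin (hU x hx)
  have h3 : ContDiffOn ℝ 0 G.f2 (Icc 0 L) := by
    rw [contDiffOn_zero]
    exact ((continuous_extend hL g).const_smul d⁻¹).neg.continuousOn
  have h4 : ContDiffOn ℝ 1 G.f1 (Icc 0 L) := by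
    rw [show (1 : WithTop ℕ∞) = 0 + 1 by norm_num, contDiffOn_succ_iff_derivWithin hU]
    exact ⟨fun x hx => (G.hasDeriv1 x hx).differentiableWithinAt, by simp, h3.congr h2⟩
  rw [show (2 : WithTop ℕ∞) = 1 + 1 by norm_num, contDiffOn_succ_iff_derivWithin hU]
  exact ⟨fun x hx => (G.hasDeriv x hx).differentiableWithinAt, by simp, h4.congr h1⟩

/-- The Green operator inverts `-d ∂²` under zero Dirichlet data. -/
theorem eq_greenFun (hL' : 0 < L) {d : ℝ} (hd : d ≠ 0) (g : C(Icc (0 : ℝ) L, ℝ)) (u : TwiceDiff L)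
    (u0 : u.f 0 = 0) (uL : u.f L = 0) (hu : ∀ x (hx : x ∈ Icc 0 L), -(d * u.f2 x) = g ⟨x, hx⟩) :
    ∀ x ∈ Icc 0 L, u.f x = (greenFun hL d g).f x := by
  set h := u.sub (greenFun hL d g) with hh
  have h2 : ∀ x ∈ Icc 0 L, h.f2 x = 0 := by
    intro x hx
    have e1 := hu x hx
    have e2 := greenFun_f2 hL hd g hx
    have : d * (u.f2 x - (greenFun hL d g).f2 x) = 0 := by linarith
    exact (mul_eq_zero.1 this).resolve_left hd
  have hconst : ∀ x ∈ Icc 0 L, h.f1 x = h.f1 0 := by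
    intro x hx
    refine (convex_Icc 0 L).is_const_of_fderivWithin_eq_zero
      (fun y hy => (h.hasDeriv1 y hy).differentiableWithinAt) (fun y hy => ?_) hx
      (left_mem_Icc.2 hL)
    have := (h.hasDeriv1 y hy).hasFDerivWithinAt.fderivWithin (uniqueDiffOn_Icc hL' y hy)
    rw [this, h2 y hy]
    ext
    simp
  have h0 : h.f 0 = 0 := by simp [hh, TwiceDiff.sub, u0, greenFun_zero]
  have hR : h.f L = 0 := by simp [hh, TwiceDiff.sub, uL, greenFun_right hL hL']
  have hlin : ∀ x ∈ Icc 0 L, h.f x - h.f1 0 * x = h.f 0 - h.f1 0 * 0 := by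
    intro x hx
    have hd : ∀ y ∈ Icc 0 L, HasDerivWithinAt (fun y => h.f y - h.f1 0 * y) 0 (Icc 0 L) y := by
      intro y hy
      have := (h.hasDeriv y hy).sub (((hasDerivAt_id y).const_mul (h.f1 0)).hasDerivWithinAt)
      refine this.congr_deriv ?_
      rw [hconst y hy]
      ring
    refine (convex_Icc 0 L).is_const_of_fderivWithin_eq_zero (f := fun y => h.f y - h.f1 0 * y)
      (fun y hy => (hd y hy).differentiableWithinAt) (fun y hy => ?_) hx
      (left_mem_Icc.2 hL)
    have := (hd y hy).hasFDerivWithinAt.fderivWithin (uniqueDiffOn_Icc hL' y hy)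
    rw [this]
    ext
    simp
  have hs : h.f1 0 = 0 := by
    have := hlin L (right_mem_Icc.2 hL)
    rw [h0, hR] at this
    have h3 : h.f1 0 * L = 0 := by linarith
    exact (mul_eq_zero.1 h3).resolve_right hL'.ne'
  intro x hx
  have := hlin x hx
  rw [h0, hs] at this
  have h3 : h.f x = 0 := by linarith
  exact sub_eq_zero.1 h3

end Volterra

namespace TwiceDiff

variable {L : ℝ}

/-- Reflection about the midpoint of `[0, L]`. -/
def reflect (g : TwiceDiff L) : TwiceDiff L where
  f x := g.f (L - x)
  f1 x := -g.f1 (L - x)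
  f2 x := g.f2 (L - x)
  hasDeriv x hx := by
    have hm : MapsTo (fun y => L - y) (Icc 0 L) (Icc 0 L) :=
      fun y hy => ⟨by linarith [hy.2], by linarith [hy.1]⟩
    have := (g.hasDeriv (L - x) (hm hx)).comp x ((hasDerivWithinAt_id x (Icc 0 L)).const_sub L) hm
    exact this.congr_deriv (by ring)
  hasDeriv1 x hx := by
    have hm : MapsTo (fun y => L - y) (Icc 0 L) (Icc 0 L) :=
      fun y hy => ⟨by linarith [hy.2], by linarith [hy.1]⟩
    have := (g.hasDeriv1 (L - x) (hm hx)).comp x ((hasDerivWithinAt_id x (Icc 0 L)).const_sub L) hm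
    exact this.neg.congr_deriv (by ring)

theorem exists_linear_lower_bound (g : TwiceDiff L) (hL : 0 < L) (g0 : g.f 0 = 0)
    (g1 : 0 < g.f1 0) (gpos : ∀ x ∈ Ioo 0 L, 0 < g.f x) :
    ∃ c, 0 < c ∧ ∀ x ∈ Icc 0 (L / 2), c * x ≤ g.f x := by
  have h0 := g.hasDeriv 0 (left_mem_Icc.2 hL.le)
  rw [hasDerivWithinAt_iff_tendsto_slope] at h0
  have h1 := h0.eventually (lt_mem_nhds (half_lt_self g1))
  rw [eventually_nhdsWithin_iff, Metric.eventually_nhds_iff] at h1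
  obtain ⟨δ, hδ, h1⟩ := h1
  have hcont : ContinuousOn g.f (Icc (min δ (L / 2)) (L / 2)) :=
    g.continuousOn.mono fun x hx =>
      ⟨(le_min hδ.le (by linarith)).trans hx.1, hx.2.trans (by linarith)⟩
  obtain ⟨y, hy, hmin⟩ := isCompact_Icc.exists_isMinOn
    (nonempty_Icc.2 (min_le_right δ (L / 2))) hcont
  have hy' : y ∈ Ioo 0 L := ⟨(lt_min hδ (by linarith)).trans_le hy.1, by linarith [hy.2]⟩
  refine ⟨min (g.f1 0 / 2) (g.f y / L), lt_min (half_pos g1) (div_pos (gpos y hy') hL), ?_⟩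
  intro x hx
  rcases eq_or_lt_of_le hx.1 with rfl | hx0
  · simp [g0]
  rcases lt_or_ge x δ with hxδ | hxδ
  · have h2 := @h1 x (by rwa [Real.dist_eq, sub_zero, abs_of_pos hx0])
      ⟨⟨hx.1, by linarith [hx.2]⟩, hx0.ne'⟩
    rw [slope_def_field, g0, sub_zero, sub_zero, lt_div_iff₀ hx0] at h2
    exact (mul_le_mul_of_nonneg_right (min_le_left _ _) hx.1).trans h2.le
  · have h2 : g.f y ≤ g.f x := hmin ⟨(min_le_left _ _).trans hxδ, hx.2⟩
    refine (mul_le_mul_of_nonneg_right (min_le_right _ _) hx.1).trans (le_trans ?_ h2)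
    rw [div_mul_eq_mul_div, div_le_iff₀ hL]
    exact mul_le_mul_of_nonneg_left (by linarith [hx.2]) (gpos y hy').le

theorem pos_left_of_deriv_close (g : TwiceDiff L) (hL : 0 < L) (g0 : g.f 0 = 0)
    (g1 : 0 < g.f1 0) (gpos : ∀ x ∈ Ioo 0 L, 0 < g.f x) :
    ∃ ε, 0 < ε ∧ ∀ h : TwiceDiff L, h.f 0 = 0 → (∀ x ∈ Icc 0 L, |h.f1 x - g.f1 x| ≤ ε) →
      ∀ x ∈ Ioc 0 (L / 2), 0 < h.f x := by
  obtain ⟨c, hc, hg⟩ := g.exists_linear_lower_bound hL g0 g1 gpos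
  refine ⟨c / 2, half_pos hc, fun h h0 hh x hx => ?_⟩
  have h1 := (convex_Icc 0 L).norm_image_sub_le_of_norm_hasDerivWithin_le (C := c / 2)
    (fun y hy => (h.sub g).hasDeriv y hy) hh (left_mem_Icc.2 hL.le)
    (show x ∈ Icc 0 L from ⟨hx.1.le, by linarith [hx.2]⟩)
  simp only [TwiceDiff.sub, h0, g0, sub_zero, Real.norm_eq_abs, abs_of_pos hx.1] at h1
  have h2 := hg x ⟨hx.1.le, hx.2⟩
  have h3 := (abs_le.1 h1).1
  have h4 : 0 < c * x := mul_pos hc hx.1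
  linarith

/-- Positivity in the interior is stable under small perturbations of the derivative, provided the
boundary derivatives do not vanish. -/
theorem pos_of_deriv_close (g : TwiceDiff L) (hL : 0 < L) (g0 : g.f 0 = 0) (gL : g.f L = 0)
    (g1 : 0 < g.f1 0) (g1L : g.f1 L < 0) (gpos : ∀ x ∈ Ioo 0 L, 0 < g.f x) :
    ∃ ε, 0 < ε ∧ ∀ h : TwiceDiff L, h.f 0 = 0 → h.f L = 0 →
      (∀ x ∈ Icc 0 L, |h.f1 x - g.f1 x| ≤ ε) → ∀ x ∈ Ioo 0 L, 0 < h.f x := by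
  obtain ⟨ε, hε, H⟩ := g.pos_left_of_deriv_close hL g0 g1 gpos
  obtain ⟨ε', hε', H'⟩ := g.reflect.pos_left_of_deriv_close hL (by simpa [reflect] using gL)
    (by simpa [reflect] using g1L)
    (fun x hx => gpos (L - x) ⟨by linarith [hx.2], by linarith [hx.1]⟩)
  refine ⟨min ε ε', lt_min hε hε', fun h h0 hR hh x hx => ?_⟩
  rcases le_total x (L / 2) with hx2 | hx2
  · exact H h h0 (fun y hy => (hh y hy).trans (min_le_left _ _)) x ⟨hx.1, hx2⟩
  · have := H' h.reflect (by simpa [reflect] using hR) (fun y hy => ?_) (L - x)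
      ⟨by linarith [hx.2], by linarith⟩
    · simpa [reflect] using this
    · have h1 := (hh (L - y) ⟨by linarith [hy.2], by linarith [hy.1]⟩).trans (min_le_right _ _)
      rw [abs_sub_comm] at h1
      refine le_of_eq_of_le (congrArg _ ?_) h1
      simp only [reflect]
      ring

theorem eq_zero_of_scalar_cauchy_data (g : TwiceDiff L) {C : ℝ} (hC : 0 ≤ C)
    (hg : ∀ x ∈ Ioo 0 L, |g.f2 x| ≤ C * |g.f x|) {p : ℝ} (hp : p ∈ Icc 0 L) (h0 : g.f p = 0)
    (h1 : g.f1 p = 0) : ∀ x ∈ Icc 0 L, g.f x = 0 := fun x hx =>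
  (eq_zero_of_cauchy_data g (zero L) hC (fun x hx => by simpa [zero] using hg x hx)
    (fun x _ => by simp only [zero, abs_zero]; positivity) hp h0 h1 rfl rfl x hx).1

theorem deriv_zero_pos (g : TwiceDiff L) (hL : 0 < L) {C : ℝ} (hC : 0 ≤ C)
    (hg : ∀ x ∈ Ioo 0 L, |g.f2 x| ≤ C * |g.f x|) (g0 : g.f 0 = 0) (gL : g.f L = 0)
    (gpos : ∀ x ∈ Ioo 0 L, 0 < g.f x) : 0 < g.f1 0 := by
  have hnn := nonneg_of_pos g g0 gL fun x hx => (gpos x hx).le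
  have h1 := g.mul_deriv_nonneg (left_mem_Icc.2 hL.le) (right_mem_Icc.2 hL.le) fun x hx => by
    rw [g0]
    exact hnn x (by rwa [uIcc_of_le hL.le] at hx)
  rw [sub_zero] at h1
  refine lt_of_le_of_ne (nonneg_of_mul_nonneg_right h1 hL) fun h => ?_
  have hm : L / 2 ∈ Ioo 0 L := ⟨by linarith, by linarith⟩
  exact (gpos _ hm).ne' (g.eq_zero_of_scalar_cauchy_data hC hg (left_mem_Icc.2 hL.le) g0 h.symm _
    (Ioo_subset_Icc_self hm))

theorem deriv_right_neg (g : TwiceDiff L) (hL : 0 < L) {C : ℝ} (hC : 0 ≤ C)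
    (hg : ∀ x ∈ Ioo 0 L, |g.f2 x| ≤ C * |g.f x|) (g0 : g.f 0 = 0) (gL : g.f L = 0)
    (gpos : ∀ x ∈ Ioo 0 L, 0 < g.f x) : g.f1 L < 0 := by
  have hm : ∀ x ∈ Ioo 0 L, L - x ∈ Ioo 0 L :=
    fun x hx => ⟨by linarith [hx.2], by linarith [hx.1]⟩
  have := g.reflect.deriv_zero_pos hL hC (fun x hx => hg _ (hm x hx)) (by simpa [reflect] using gL)
    (by simpa [reflect] using g0) (fun x hx => gpos _ (hm x hx))
  simpa [reflect] using this

/-- Strong maximum principle. -/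
theorem pos_of_nonneg (g : TwiceDiff L) {C : ℝ} (hC : 0 ≤ C)
    (hg : ∀ x ∈ Ioo 0 L, |g.f2 x| ≤ C * |g.f x|) (hnn : ∀ x ∈ Icc 0 L, 0 ≤ g.f x)
    (hne : ∃ x ∈ Icc 0 L, g.f x ≠ 0) : ∀ x ∈ Ioo 0 L, 0 < g.f x := by
  intro x hx
  refine lt_of_le_of_ne (hnn x (Ioo_subset_Icc_self hx)) fun h => ?_
  have hmin : IsLocalMin g.f x := by
    filter_upwards [Icc_mem_nhds hx.1 hx.2] with y hy
    rw [← h]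
    exact hnn y hy
  obtain ⟨y, hy, hy0⟩ := hne
  exact hy0 (g.eq_zero_of_scalar_cauchy_data hC hg (Ioo_subset_Icc_self hx) h.symm
    (hmin.hasDerivAt_eq_zero (g.hasDerivAt hx)) y hy)

end TwiceDiff

section FixedPoint

/-- Continuous functions on `[0, L]`. -/
abbrev Cont (L : ℝ) := C(Icc (0 : ℝ) L, ℝ)

variable {L : ℝ}

/-- The reaction terms `κ u (m - A u - B v)` and `(u - v) / τ` of the system with resource `m`. -/
noncomputable def reaction (τ κ A B : ℝ) (p : Cont L × (Cont L × Cont L)) : Cont L × Cont L :=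
  (κ • (p.2.1 * (p.1 - A • p.2.1 - B • p.2.2)), τ⁻¹ • (p.2.1 - p.2.2))

theorem reaction_fst_apply (τ κ A B : ℝ) (p : Cont L × (Cont L × Cont L)) (x : Icc (0 : ℝ) L) :
    (reaction τ κ A B p).1 x = κ * p.2.1 x * (p.1 x - A * p.2.1 x - B * p.2.2 x) := by
  simp [reaction, mul_assoc]

theorem reaction_snd_apply (τ κ A B : ℝ) (p : Cont L × (Cont L × Cont L)) (x : Icc (0 : ℝ) L) :
    (reaction τ κ A B p).2 x = 1 / τ * (p.2.1 x - p.2.2 x) := by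
  simp [reaction]

theorem continuous_reaction (τ κ A B : ℝ) : Continuous (reaction (L := L) τ κ A B) := by
  unfold reaction
  fun_prop

/-- The derivative of `reaction`. -/
noncomputable def reactionDeriv (τ κ A B : ℝ) (p : Cont L × (Cont L × Cont L)) :
    Cont L × (Cont L × Cont L) →L[ℝ] Cont L × Cont L :=
  letI u := ContinuousLinearMap.fst ℝ (Cont L) (Cont L) ∘L
    ContinuousLinearMap.snd ℝ (Cont L) (Cont L × Cont L)
  letI v := ContinuousLinearMap.snd ℝ (Cont L) (Cont L) ∘L
    ContinuousLinearMap.snd ℝ (Cont L) (Cont L × Cont L)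
  letI q := ContinuousLinearMap.fst ℝ (Cont L) (Cont L × Cont L) - A • u - B • v
  (κ • (u p • q + q p • u)).prod (τ⁻¹ • (u - v))

theorem hasStrictFDerivAt_reaction (τ κ A B : ℝ) (p : Cont L × (Cont L × Cont L)) :
    HasStrictFDerivAt (reaction τ κ A B) (reactionDeriv τ κ A B p) p := by
  let u := ContinuousLinearMap.fst ℝ (Cont L) (Cont L) ∘L
    ContinuousLinearMap.snd ℝ (Cont L) (Cont L × Cont L)
  let v := ContinuousLinearMap.snd ℝ (Cont L) (Cont L) ∘L
    ContinuousLinearMap.snd ℝ (Cont L) (Cont L × Cont L)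
  let q := ContinuousLinearMap.fst ℝ (Cont L) (Cont L × Cont L) - A • u - B • v
  exact ((u.hasStrictFDerivAt.mul q.hasStrictFDerivAt).const_smul κ).prodMk
    ((τ⁻¹ • (u - v)).hasStrictFDerivAt)

variable (hL : 0 ≤ L) (d τ κ A B : ℝ)

/-- The Green operator acting on both components. -/
noncomputable def greenPair : Cont L × Cont L →L[ℝ] Cont L × Cont L :=
  (green hL d).prodMap (green hL d)

theorem isCompactOperator_greenPair : IsCompactOperator (greenPair hL d) := by
  have h := isCompactOperator_green hL d
  have h1 := (h.comp_clm (ContinuousLinearMap.fst ℝ (Cont L) (Cont L))).clm_comp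
    (ContinuousLinearMap.inl ℝ (Cont L) (Cont L))
  have h2 := (h.comp_clm (ContinuousLinearMap.snd ℝ (Cont L) (Cont L))).clm_comp
    (ContinuousLinearMap.inr ℝ (Cont L) (Cont L))
  have h3 : (greenPair hL d : Cont L × Cont L → Cont L × Cont L) =
      ContinuousLinearMap.inl ℝ (Cont L) (Cont L) ∘
        (green hL d ∘ ContinuousLinearMap.fst ℝ (Cont L) (Cont L)) +
      ContinuousLinearMap.inr ℝ (Cont L) (Cont L) ∘
        (green hL d ∘ ContinuousLinearMap.snd ℝ (Cont L) (Cont L)) := by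
    funext U
    simp [greenPair, Prod.map]
  rw [h3]
  exact h1.add h2

/-- `U` is a solution with resource `m` of the integral form of the steady state system. -/
def IsFixed (m : Cont L) (U : Cont L × Cont L) : Prop :=
  greenPair hL d (reaction τ κ A B (m, U)) = U

variable {hL d τ κ A B}

namespace IsFixed

variable {m : Cont L} {U : Cont L × Cont L}

theorem f_eq_fst (h : IsFixed hL d τ κ A B m U) {x : ℝ} (hx : x ∈ Icc 0 L) :
    (greenFun hL d (reaction τ κ A B (m, U)).1).f x = U.1 ⟨x, hx⟩ := by
  rw [greenFun_f hL d _ hx]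
  exact congrArg (fun V : Cont L × Cont L => V.1 ⟨x, hx⟩) h

theorem f_eq_snd (h : IsFixed hL d τ κ A B m U) {x : ℝ} (hx : x ∈ Icc 0 L) :
    (greenFun hL d (reaction τ κ A B (m, U)).2).f x = U.2 ⟨x, hx⟩ := by
  rw [greenFun_f hL d _ hx]
  exact congrArg (fun V : Cont L × Cont L => V.2 ⟨x, hx⟩) h

theorem isSol (h : IsFixed hL d τ κ A B m U) (hL' : 0 < L) (hd : 0 < d) :
    IsSol L d τ κ A B (IccExtend hL m) (greenFun hL d (reaction τ κ A B (m, U)).1)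
      (greenFun hL d (reaction τ κ A B (m, U)).2) := by
  refine ⟨fun x hx => ?_, fun x hx => ?_, greenFun_zero .., greenFun_right hL hL' ..,
    greenFun_zero .., greenFun_right hL hL' ..⟩
  · have hx' := Ioo_subset_Icc_self hx
    rw [greenFun_f2 hL hd.ne' _ hx', reaction_fst_apply, h.f_eq_fst hx', h.f_eq_snd hx',
      IccExtend_of_mem hL _ hx']
  · have hx' := Ioo_subset_Icc_self hx
    rw [greenFun_f2 hL hd.ne' _ hx', reaction_snd_apply, h.f_eq_fst hx', h.f_eq_snd hx']

theorem exists_second_deriv_bound (h : IsFixed hL d τ κ A B m U) (hd : 0 < d) :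
    ∃ C, 0 ≤ C ∧ ∀ x ∈ Ioo 0 L, |(greenFun hL d (reaction τ κ A B (m, U)).1).f2 x| ≤
      C * |(greenFun hL d (reaction τ κ A B (m, U)).1).f x| := by
  refine ⟨‖d⁻¹ * κ‖ * ‖m - A • U.1 - B • U.2‖, by positivity, fun x hx => ?_⟩
  have hx' := Ioo_subset_Icc_self hx
  have h1 := greenFun_f2 hL hd.ne' (reaction τ κ A B (m, U)).1 hx'
  rw [reaction_fst_apply] at h1
  have h2 := (m - A • U.1 - B • U.2).norm_coe_le_norm ⟨x, hx'⟩
  simp only [ContinuousMap.sub_apply, ContinuousMap.smul_apply, smul_eq_mul] at h2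
  rw [h.f_eq_fst hx']
  have h3 : (greenFun hL d (reaction τ κ A B (m, U)).1).f2 x =
      -((d⁻¹ * κ) * (m ⟨x, hx'⟩ - A * U.1 ⟨x, hx'⟩ - B * U.2 ⟨x, hx'⟩) * U.1 ⟨x, hx'⟩) := by
    field_simp
    linarith
  rw [h3, abs_neg, abs_mul, abs_mul]
  gcongr
  · exact le_rfl
  · exact h2

theorem pos_fun (h : IsFixed hL d τ κ A B m U)
    (hU : ∀ x (hx : x ∈ Ioo 0 L), 0 < U.1 ⟨x, Ioo_subset_Icc_self hx⟩) :
    ∀ x ∈ Ioo 0 L, 0 < (greenFun hL d (reaction τ κ A B (m, U)).1).f x := by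
  intro x hx
  rw [h.f_eq_fst (Ioo_subset_Icc_self hx)]
  exact hU x hx

/-- The linearization at a positive solution is invertible. -/
theorem isInvertible (h : IsFixed hL d τ κ A B m U) (hL' : 0 < L) (hd : 0 < d) (hτ : 0 < τ)
    (hκ : 0 < κ) (hA : 0 < A) (hB : 0 < B) (hU : ∀ x (hx : x ∈ Ioo 0 L),
      0 < U.1 ⟨x, Ioo_subset_Icc_self hx⟩) :
    ((ContinuousLinearMap.snd ℝ (Cont L) (Cont L × Cont L) -
      greenPair hL d ∘L reactionDeriv τ κ A B (m, U)) ∘L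
        ContinuousLinearMap.inr ℝ (Cont L) (Cont L × Cont L)).IsInvertible := by
  set T : Cont L × Cont L →L[ℝ] Cont L × Cont L := greenPair hL d ∘L
    (reactionDeriv τ κ A B (m, U) ∘L ContinuousLinearMap.inr ℝ (Cont L) (Cont L × Cont L)) with hT
  have hTc : IsCompactOperator T := (isCompactOperator_greenPair hL d).comp_clm
    (reactionDeriv τ κ A B (m, U) ∘L ContinuousLinearMap.inr ℝ (Cont L) (Cont L × Cont L))
  have hnot : ¬ Module.End.HasEigenvalue (T : Module.End ℝ (Cont L × Cont L)) 1 := by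
    intro hev
    obtain ⟨W, hW⟩ := hev.exists_hasEigenvector
    have hTW : T W = W := by simpa using hW.apply_eq_smul
    refine hW.2 ?_
    set R := reactionDeriv τ κ A B (m, U) (0, W) with hR
    have hR1 : ∀ x, R.1 x = κ * (U.1 x * (-(A * W.1 x) - B * W.2 x) +
        (m x - A * U.1 x - B * U.2 x) * W.1 x) := by
      intro x
      simp [hR, reactionDeriv, mul_add]
    have hR2 : ∀ x, R.2 x = 1 / τ * (W.1 x - W.2 x) := by
      intro x
      simp [hR, reactionDeriv]
    have hw : ∀ x (hx : x ∈ Icc 0 L), (greenFun hL d R.1).f x = W.1 ⟨x, hx⟩ := fun x hx =>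
      congrArg (fun V : Cont L × Cont L => V.1 ⟨x, hx⟩) hTW
    have hz : ∀ x (hx : x ∈ Icc 0 L), (greenFun hL d R.2).f x = W.2 ⟨x, hx⟩ := fun x hx =>
      congrArg (fun V : Cont L × Cont L => V.2 ⟨x, hx⟩) hTW
    have hpos := h.pos_fun hU
    have key := (h.isSol hL' hd).linear_trivial hL' hd hτ hκ hA hB
      (continuous_extend hL m).continuousOn hpos _ (TwiceDiff.continuousOn _) hpos
      (greenFun hL d R.1) (greenFun hL d R.2)
      (fun x hx => by
        have hx' := Ioo_subset_Icc_self hx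
        have e := greenFun_f2 hL hd.ne' R.1 hx'
        rw [hR1] at e
        rw [hw x hx', hz x hx', h.f_eq_fst hx', h.f_eq_snd hx', IccExtend_of_mem hL _ hx']
        linear_combination -e)
      (fun x hx => by
        have hx' := Ioo_subset_Icc_self hx
        have e := greenFun_f2 hL hd.ne' R.2 hx'
        rw [hR2] at e
        rw [hw x hx', hz x hx']
        linear_combination -e)
      (greenFun_zero ..) (greenFun_right hL hL' ..) (greenFun_zero ..) (greenFun_right hL hL' ..)
    refine Prod.ext ?_ ?_ <;> ext x
    · exact (hw x x.2).symm.trans (key x x.2).1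
    · exact (hz x x.2).symm.trans (key x x.2).2
  obtain ⟨e, he⟩ : IsUnit (1 - T) := by
    have := (hTc.hasEigenvalue_or_mem_resolventSet one_ne_zero).resolve_left hnot
    rwa [spectrum.mem_resolventSet_iff, map_one] at this
  refine ⟨ContinuousLinearEquiv.unitsEquiv ℝ (Cont L × Cont L) e, ?_⟩
  refine ContinuousLinearMap.ext fun W => ?_
  change (e : Cont L × Cont L →L[ℝ] Cont L × Cont L) W = _
  rw [he]
  rfl

/-- Positive solutions persist under small perturbations of the resource. -/
theorem eventually_exists (h : IsFixed hL d τ κ A B m U) (hL' : 0 < L) (hd : 0 < d) (hτ : 0 < τ)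
    (hκ : 0 < κ) (hA : 0 < A) (hB : 0 < B) (hU : ∀ x (hx : x ∈ Ioo 0 L),
      0 < U.1 ⟨x, Ioo_subset_Icc_self hx⟩) :
    ∀ᶠ m' in 𝓝 m, ∃ U', IsFixed hL d τ κ A B m' U' ∧ ∀ x (hx : x ∈ Ioo 0 L),
      0 < U'.1 ⟨x, Ioo_subset_Icc_self hx⟩ := by
  have hF : HasStrictFDerivAt (fun p : Cont L × (Cont L × Cont L) =>
      p.2 - greenPair hL d (reaction τ κ A B p)) (ContinuousLinearMap.snd ℝ (Cont L)
      (Cont L × Cont L) - greenPair hL d ∘L reactionDeriv τ κ A B (m, U)) (m, U) :=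
    (ContinuousLinearMap.snd ℝ (Cont L) (Cont L × Cont L)).hasStrictFDerivAt.sub
      ((greenPair hL d).hasStrictFDerivAt.comp (m, U) (hasStrictFDerivAt_reaction τ κ A B (m, U)))
  have hinv := h.isInvertible hL' hd hτ hκ hA hB hU
  have htend := hF.tendsto_implicitFunctionOfProdDomain hinv
  have hev := hF.eventually_apply_implicitFunctionOfProdDomain hinv
  set ψ := hF.implicitFunctionOfProdDomain hinv
  obtain ⟨C, hC, hbound⟩ := h.exists_second_deriv_bound hd
  have hsol := h.isSol hL' hd
  have hpos := h.pos_fun hU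
  obtain ⟨ε, hε, hclose⟩ := TwiceDiff.pos_of_deriv_close _ hL' hsol.u_zero hsol.u_right
    (TwiceDiff.deriv_zero_pos _ hL' hC hbound hsol.u_zero hsol.u_right hpos)
    (TwiceDiff.deriv_right_neg _ hL' hC hbound hsol.u_zero hsol.u_right hpos) hpos
  have hcont : Tendsto (fun m' => greenDeriv hL d (reaction τ κ A B (m', ψ m')).1) (𝓝 m)
      (𝓝 (greenDeriv hL d (reaction τ κ A B (m, U)).1)) :=
    ((((greenDeriv hL d).continuous.comp continuous_fst).comp
      (continuous_reaction τ κ A B)).tendsto (m, U)).comp (tendsto_id.prodMk_nhds htend)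
  filter_upwards [hev, hcont (Metric.closedBall_mem_nhds _ hε)] with m' h1 h2
  have hfix : IsFixed hL d τ κ A B m' (ψ m') := by
    have h3 : U - greenPair hL d (reaction τ κ A B (m, U)) = 0 := sub_eq_zero.2 (Eq.symm h)
    exact (sub_eq_zero.1 (h1.trans h3)).symm
  refine ⟨ψ m', hfix, fun x hx => ?_⟩
  rw [← hfix.f_eq_fst]
  refine hclose _ (greenFun_zero ..) (greenFun_right hL hL' ..) (fun y hy => ?_) x hx
  rw [greenFun_f1 hL d _ hy, greenFun_f1 hL d _ hy]
  rw [mem_preimage, mem_closedBall_iff_norm] at h2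
  exact (ContinuousMap.norm_coe_le_norm _ ⟨y, hy⟩).trans h2

end IsFixed

end FixedPoint

section Existence

variable {L d τ κ A B : ℝ} {hL : 0 ≤ L}

theorem norm_reaction_le (p : Cont L × (Cont L × Cont L)) {M K : ℝ} (hm : ‖p.1‖ ≤ M)
    (hu : ‖p.2.1‖ ≤ K) (hv : ‖p.2.2‖ ≤ K) :
    ‖reaction τ κ A B p‖ ≤ max (‖κ‖ * (K * (M + ‖A‖ * K + ‖B‖ * K))) (‖τ⁻¹‖ * (K + K)) := by
  have hK : 0 ≤ K := (norm_nonneg _).trans hu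
  refine max_le_max ?_ ?_
  · change ‖κ • (p.2.1 * (p.1 - A • p.2.1 - B • p.2.2))‖ ≤ _
    rw [norm_smul]
    refine mul_le_mul_of_nonneg_left ?_ (norm_nonneg κ)
    refine (norm_mul_le _ _).trans (mul_le_mul hu ?_ (norm_nonneg _) hK)
    refine (norm_sub_le _ _).trans (add_le_add ((norm_sub_le _ _).trans (add_le_add hm ?_)) ?_)
    · rw [norm_smul]
      exact mul_le_mul_of_nonneg_left hu (norm_nonneg A)
    · rw [norm_smul]
      exact mul_le_mul_of_nonneg_left hv (norm_nonneg B)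
  · change ‖τ⁻¹ • (p.2.1 - p.2.2)‖ ≤ _
    rw [norm_smul]
    refine mul_le_mul_of_nonneg_left ?_ (norm_nonneg _)
    exact (norm_sub_le _ _).trans (add_le_add hu hv)

/-- A priori bounds for positive solutions. -/
theorem IsFixed.mem_Icc {m : Cont L} {U : Cont L × Cont L} (h : IsFixed hL d τ κ A B m U)
    (hL' : 0 < L) (hd : 0 < d) (hτ : 0 < τ) (hκ : 0 < κ) (hA : 0 < A) (hB : 0 < B)
    (hm : ∀ x, m x ≤ 1) (hU : ∀ x (hx : x ∈ Ioo 0 L), 0 < U.1 ⟨x, Ioo_subset_Icc_self hx⟩)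
    (x : Icc (0 : ℝ) L) : U.1 x ∈ Icc 0 (1 / A) ∧ U.2 x ∈ Icc 0 (1 / A) := by
  have hsol := h.isSol hL' hd
  have hpos := h.pos_fun hU
  have hv := hsol.v_pos hL' hd hτ hpos
  have h1 := hsol.u_le hL' hd hκ hA hB (fun x _ => hm _) fun x hx => (hv x hx).le
  have h2 := hsol.v_le hL' hd hτ (by positivity : 0 ≤ 1 / A)
    fun x hx => h1 x (Ioo_subset_Icc_self hx)
  have h3 := TwiceDiff.nonneg_of_pos _ hsol.u_zero hsol.u_right fun x hx => (hpos x hx).le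
  have h4 := TwiceDiff.nonneg_of_pos _ hsol.v_zero hsol.v_right fun x hx => (hv x hx).le
  obtain ⟨x, hx⟩ := x
  rw [← h.f_eq_fst, ← h.f_eq_snd]
  exact ⟨⟨h3 x hx, h1 x hx⟩, ⟨h4 x hx, h2 x hx⟩⟩

/-- Positive solutions for a convergent sequence of resources subconverge to a positive solution,
as long as the limit resource stays above the threshold. -/
theorem exists_isFixed_of_tendsto (hL' : 0 < L) (hd : 0 < d) (hτ : 0 < τ) (hκ : 0 < κ)
    (hA : 0 < A) (hB : 0 < B) {m : ℕ → Cont L} {m₀ : Cont L} {U : ℕ → Cont L × Cont L}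
    (hm : Tendsto m atTop (𝓝 m₀)) (hm1 : ∀ n x, m n x ≤ 1) {δ : ℝ} (hδ : 0 < δ)
    (hm₀ : ∀ x, d * (π / L) ^ 2 + δ ≤ κ * m₀ x) (hfix : ∀ n, IsFixed hL d τ κ A B (m n) (U n))
    (hU : ∀ n x (hx : x ∈ Ioo 0 L), 0 < (U n).1 ⟨x, Ioo_subset_Icc_self hx⟩) :
    ∃ V, IsFixed hL d τ κ A B m₀ V ∧
      ∀ x (hx : x ∈ Ioo 0 L), 0 < V.1 ⟨x, Ioo_subset_Icc_self hx⟩ := by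
  have hb := fun n => (hfix n).mem_Icc hL' hd hτ hκ hA hB (hm1 n) (hU n)
  have hA' : 0 ≤ 1 / A := by positivity
  have hu : ∀ n, ‖(U n).1‖ ≤ 1 / A := fun n => (ContinuousMap.norm_le _ hA').2 fun x => by
    rw [Real.norm_of_nonneg (hb n x).1.1]
    exact (hb n x).1.2
  have hv : ∀ n, ‖(U n).2‖ ≤ 1 / A := fun n => (ContinuousMap.norm_le _ hA').2 fun x => by
    rw [Real.norm_of_nonneg (hb n x).2.1]
    exact (hb n x).2.2
  obtain ⟨M, hM⟩ := (Metric.isBounded_range_of_tendsto m hm).exists_norm_le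
  obtain ⟨K, hK, hKU⟩ := IsCompactOperator.image_subset_compact_of_bounded
    (f := (greenPair hL d : Cont L × Cont L →ₗ[ℝ] Cont L × Cont L))
    (isCompactOperator_greenPair hL d) (Metric.isBounded_closedBall (x := 0)
      (r := max (‖κ‖ * (1 / A * (M + ‖A‖ * (1 / A) + ‖B‖ * (1 / A)))) (‖τ⁻¹‖ * (1 / A + 1 / A))))
  have hUK : ∀ n, U n ∈ K := fun n => hKU ⟨reaction τ κ A B (m n, U n),
    mem_closedBall_zero_iff.2 (norm_reaction_le _ (hM _ (mem_range_self n)) (hu n) (hv n)), hfix n⟩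
  obtain ⟨V, -, φ, hφ, hV⟩ := hK.tendsto_subseq hUK
  have hmφ := hm.comp hφ.tendsto_atTop
  have hpair : Tendsto (fun n => (m (φ n), U (φ n))) atTop (𝓝 (m₀, V)) := hmφ.prodMk_nhds hV
  have hVfix : IsFixed hL d τ κ A B m₀ V := by
    have h1 := (((greenPair hL d).continuous.comp (continuous_reaction τ κ A B)).tendsto
      (m₀, V)).comp hpair
    exact tendsto_nhds_unique (h1.congr fun n => hfix (φ n)) hV
  have hV1 : ∀ x, 0 ≤ V.1 x := fun x =>
    ge_of_tendsto' ((((continuous_eval_const (F := Cont L) x).comp continuous_fst).tendsto V).comp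
      hV) fun n => (hb (φ n) x).1.1
  have hV2 : ∀ x, 0 ≤ V.2 x := fun x =>
    ge_of_tendsto' ((((continuous_eval_const (F := Cont L) x).comp continuous_snd).tendsto V).comp
      hV) fun n => (hb (φ n) x).2.1
  have hsol := hVfix.isSol hL' hd
  refine ⟨V, hVfix, fun x hx => ?_⟩
  rw [← hVfix.f_eq_fst]
  obtain ⟨C, hC, hbound⟩ := hVfix.exists_second_deriv_bound hd
  refine TwiceDiff.pos_of_nonneg _ hC hbound (fun y hy => ?_) ?_ x hx
  · rw [hVfix.f_eq_fst hy]
    exact hV1 _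
  by_contra! hzero
  have hV1' : V.1 = 0 := by
    ext ⟨y, hy⟩
    rw [← hVfix.f_eq_fst hy, hzero y hy]
    rfl
  have hV2' : V.2 = 0 := by
    ext ⟨y, hy⟩
    refine le_antisymm ?_ (hV2 _)
    rw [← hVfix.f_eq_snd hy]
    exact hsol.v_le hL' hd hτ le_rfl (fun z hz => (hzero z (Ioo_subset_Icc_self hz)).le) y hy
  have hlim : Tendsto (fun n => κ • (m (φ n) - A • (U (φ n)).1 - B • (U (φ n)).2)) atTop
      (𝓝 (κ • m₀)) := by
    have h1 : Continuous fun p : Cont L × (Cont L × Cont L) =>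
        κ • (p.1 - A • p.2.1 - B • p.2.2) := by fun_prop
    have h2 := (h1.tendsto (m₀, V)).comp hpair
    simpa [hV1', hV2', Function.comp_def] using h2
  obtain ⟨n, hn⟩ := (hlim.eventually (Metric.ball_mem_nhds _ hδ)).exists
  rw [dist_eq_norm] at hn
  refine ((hfix (φ n)).isSol hL' hd).false_of_small hL' hd ((hfix (φ n)).pos_fun (hU (φ n)))
    fun y hy => ?_
  have hy' := Ioo_subset_Icc_self hy
  rw [(hfix (φ n)).f_eq_fst hy', (hfix (φ n)).f_eq_snd hy', IccExtend_of_mem hL _ hy']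
  have h3 := (ContinuousMap.norm_coe_le_norm _ ⟨y, hy'⟩).trans_lt hn
  simp only [ContinuousMap.sub_apply, ContinuousMap.smul_apply, smul_eq_mul,
    Real.norm_eq_abs] at h3
  linarith [(abs_lt.1 h3).1, hm₀ ⟨y, hy'⟩]

/-- The first Dirichlet eigenfunction as a continuous function on `[0, L]`. -/
noncomputable def sineMap (L : ℝ) : Cont L :=
  ⟨fun x => (TwiceDiff.sine L).f x, by simp only [TwiceDiff.sine]; fun_prop⟩

theorem green_sineMap (hL' : 0 < L) (hd : d ≠ 0) (c : ℝ) :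
    green hL d ((c * (d * (π / L) ^ 2)) • sineMap L) = c • sineMap L := by
  have h1 : green hL d ((d * (π / L) ^ 2) • sineMap L) = sineMap L := by
    ext ⟨x, hx⟩
    rw [← greenFun_f]
    refine (eq_greenFun hL hL' hd _ (.sine L) TwiceDiff.sine_zero (TwiceDiff.sine_right hL')
      (fun y hy => ?_) x hx).symm
    simp only [TwiceDiff.sine, sineMap, ContinuousMap.smul_apply, ContinuousMap.coe_mk, smul_eq_mul]
    ring
  rw [mul_smul, map_smul, h1]

/-- For a resource adapted to the first eigenfunction there is an explicit positive solution. -/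
theorem exists_isFixed_sine (hL' : 0 < L) (hd : 0 < d) (hτ : 0 < τ) (hκ : 0 < κ)
    (hA : 0 < A) (hB : 0 < B) (hdκ : d * (π / L) ^ 2 < κ) :
    ∃ U, IsFixed hL d τ κ A B
      ((d * (π / L) ^ 2 / κ) • 1 + (1 - d * (π / L) ^ 2 / κ) • sineMap L) U ∧
      ∀ x (hx : x ∈ Ioo 0 L), 0 < U.1 ⟨x, Ioo_subset_Icc_self hx⟩ := by
  set ω := d * (π / L) ^ 2 with hω
  have hω0 : 0 < ω := by positivity
  have hpos : 0 < 1 - ω / κ := by rwa [sub_pos, div_lt_one hκ]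
  set b := (1 - ω / κ) / (A * (1 + τ * ω) + B) with hb
  have hb0 : 0 < b := by positivity
  set a := (1 + τ * ω) * b with ha
  have ha0 : 0 < a := by positivity
  have hab : A * a + B * b = 1 - ω / κ := by
    rw [ha, hb]
    have : A * (1 + τ * ω) + B ≠ 0 := by positivity
    field_simp
  refine ⟨(a • sineMap L, b • sineMap L), ?_, fun x hx => ?_⟩
  · have h1 : reaction τ κ A B ((ω / κ) • 1 + (1 - ω / κ) • sineMap L,
        (a • sineMap L, b • sineMap L)) = ((a * ω) • sineMap L, (b * ω) • sineMap L) := by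
      refine Prod.ext ?_ ?_ <;> ext x
      · rw [reaction_fst_apply, ← hab]
        simp only [ContinuousMap.add_apply, ContinuousMap.smul_apply, ContinuousMap.one_apply,
          smul_eq_mul]
        field_simp
        ring
      · rw [reaction_snd_apply]
        simp only [ContinuousMap.smul_apply, smul_eq_mul, ha]
        field_simp
        ring
    have h2 : ∀ c : ℝ, green hL d ((c * ω) • sineMap L) = c • sineMap L :=
      green_sineMap hL' hd.ne'
    rw [IsFixed, h1, greenPair, ContinuousLinearMap.coe_prodMap', Prod.map_apply, h2, h2]
  · exact mul_pos ha0 (TwiceDiff.sine_pos hL' hx)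

/-- Existence of a positive solution with constant resource, by continuation in the resource. -/
theorem exists_isFixed_one (hL' : 0 < L) (hd : 0 < d) (hτ : 0 < τ) (hκ : 0 < κ)
    (hA : 0 < A) (hB : 0 < B) (hdκ : d * (π / L) ^ 2 < κ) :
    ∃ U, IsFixed hL d τ κ A B 1 U ∧
      ∀ x (hx : x ∈ Ioo 0 L), 0 < U.1 ⟨x, Ioo_subset_Icc_self hx⟩ := by
  have hinit := exists_isFixed_sine (hL := hL) hL' hd hτ hκ hA hB hdκ
  set ω := d * (π / L) ^ 2 with hω
  set m₀ : Cont L := (ω / κ) • 1 + (1 - ω / κ) • sineMap L with hm₀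
  have hpos : 0 ≤ 1 - ω / κ := by
    rw [sub_nonneg, div_le_one hκ]
    exact hdκ.le
  have hm₀_ge : ∀ x, ω / κ ≤ m₀ x := by
    intro x
    have : 0 ≤ (1 - ω / κ) * sineMap L x :=
      mul_nonneg hpos (TwiceDiff.sine_nonneg hL' x x.2)
    simpa [hm₀] using this
  have hm₀_le : ∀ x, m₀ x ≤ 1 := by
    intro x
    have h1 : sineMap L x ≤ 1 := sin_le_one _
    have h2 := mul_le_mul_of_nonneg_left h1 hpos
    simp only [hm₀, ContinuousMap.add_apply, ContinuousMap.smul_apply, ContinuousMap.one_apply,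
      smul_eq_mul]
    linarith
  let m : ℝ → Cont L := fun t => m₀ + t • (1 - m₀)
  have hm_apply : ∀ t x, m t x = m₀ x + t * (1 - m₀ x) := fun t x => rfl
  have hmcont : Continuous m := by fun_prop
  let S : Set ℝ := {t | ∃ U, IsFixed hL d τ κ A B (m t) U ∧
    ∀ x (hx : x ∈ Ioo 0 L), 0 < U.1 ⟨x, Ioo_subset_Icc_self hx⟩}
  have h0 : (0 : ℝ) ∈ S := by simpa [S, m] using hinit
  have hclosed : IsClosed (S ∩ Icc 0 1) := by
    refine IsSeqClosed.isClosed fun t s ht hts => ?_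
    have hs : s ∈ Icc (0 : ℝ) 1 := isClosed_Icc.mem_of_tendsto hts (.of_forall fun n => (ht n).2)
    refine ⟨?_, hs⟩
    rcases eq_or_lt_of_le hs.1 with rfl | hs0
    · exact h0
    choose U hU using fun n => (ht n).1
    refine exists_isFixed_of_tendsto hL' hd hτ hκ hA hB ((hmcont.tendsto s).comp hts) (fun n x => ?_)
      (mul_pos hs0 (sub_pos.2 hdκ)) (fun x => ?_) (fun n => (hU n).1) (fun n => (hU n).2)
    · have h1 := mul_le_mul_of_nonneg_right (ht n).2.2 (sub_nonneg.2 (hm₀_le x))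
      simp only [Function.comp_apply, hm_apply]
      linarith
    · have h1 := (div_le_iff₀ hκ).1 (hm₀_ge x)
      rw [hm_apply]
      nlinarith [mul_nonneg (sub_nonneg.2 hs.2) (sub_nonneg.2 h1)]
  have hsub : Icc (0 : ℝ) 1 ⊆ S := by
    refine hclosed.Icc_subset_of_forall_exists_gt h0 fun t ht y hy => ?_
    obtain ⟨U, hU, hUpos⟩ := ht.1
    have hev : ∀ᶠ s in 𝓝[>] t, s ∈ S := ((hmcont.tendsto t).mono_left nhdsWithin_le_nhds).eventually
      (hU.eventually_exists hL' hd hτ hκ hA hB hUpos)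
    exact (hev.and (Ioc_mem_nhdsGT hy)).exists
  have h1 : (1 : ℝ) ∈ S := hsub ⟨zero_le_one, le_rfl⟩
  simpa [S, m] using h1

theorem exists_isPosLogSol (hL' : 0 < L) (hd : 0 < d) (hτ : 0 < τ) (hκ : 0 < κ)
    (hA : 0 < A) (hB : 0 < B) (hdκ : d * (π / L) ^ 2 < κ) :
    ∃ u v, IsPosLogSol L d τ κ A B u v := by
  obtain ⟨U, hU, hUpos⟩ := exists_isFixed_one (hL := hL'.le) hL' hd hτ hκ hA hB hdκ
  have hsol := hU.isSol hL' hd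
  have hu := hU.pos_fun hUpos
  have hv := hsol.v_pos hL' hd hτ hu
  refine ⟨_, _, ⟨contDiffOn_greenFun hL'.le hL' d _, contDiffOn_greenFun hL'.le hL' d _,
    fun x hx => (hu x hx).le, fun x hx => (hv x hx).le, fun x hx => ?_, fun x hx => ?_,
    hsol.u_zero, hsol.u_right, hsol.v_zero, hsol.v_right⟩, hu, hv⟩
  · rw [TwiceDiff.deriv_deriv_eq _ hx]
    exact hsol.eqn_u x hx
  · rw [TwiceDiff.deriv_deriv_eq _ hx]
    exact hsol.eqn_v x hx

end Existence

end LogisticSteady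

open LogisticSteady

/-- the 1D logistic steady state system with d* = κL²/π² satisfies:
(i) any nonnegative classical solution has 0 ≤ u, v ≤ 1/A on (0, L);
(ii) for 0 < d < d* there is exactly one positive classical solution;
(iii) for d ≥ d* there is no positive classical solution. -/
theorem stmt15 (L τ κ A B : ℝ) (hL : 0 < L) (hτ : 0 < τ)
    (hκ : 0 < κ) (hA : 0 < A) (hB : 0 < B) :
    -- (i)
    (∀ d : ℝ, 0 < d → ∀ u v : ℝ → ℝ, IsNonnegLogSol L d τ κ A B u v →
      ∀ x ∈ Ioo 0 L, 0 ≤ u x ∧ u x ≤ 1 / A ∧ 0 ≤ v x ∧ v x ≤ 1 / A) ∧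
    -- (ii)
    (∀ d : ℝ, 0 < d → d < κ * L ^ 2 / π ^ 2 →
      ∃ u v : ℝ → ℝ, IsPosLogSol L d τ κ A B u v ∧
        ∀ u' v' : ℝ → ℝ, IsPosLogSol L d τ κ A B u' v' →
          (EqOn u' u (Icc 0 L) ∧ EqOn v' v (Icc 0 L))) ∧
    -- (iii)
    (∀ d : ℝ, κ * L ^ 2 / π ^ 2 ≤ d →
      ¬ ∃ u v : ℝ → ℝ, IsPosLogSol L d τ κ A B u v) := by
  have hstrict : ∀ d : ℝ, d < κ * L ^ 2 / π ^ 2 ↔ d * (π / L) ^ 2 < κ := fun d => by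
    rw [div_pow, lt_div_iff₀ (by positivity), mul_div_assoc', div_lt_iff₀ (by positivity)]
  refine ⟨fun d hd u v h x hx => ?_, fun d hd hlt => ?_, fun d hle => ?_⟩
  · have hsol := IsSol.of_isNonnegLogSol hL h
    have hu := h.2.2.1
    have hv := h.2.2.2.1
    have h1 := hsol.u_le hL hd hκ hA hB (fun _ _ => le_rfl) hv
    have h2 := hsol.v_le hL hd hτ (by positivity : 0 ≤ 1 / A)
      fun y hy => h1 y (Ioo_subset_Icc_self hy)
    have hx' := Ioo_subset_Icc_self hx
    exact ⟨hu x hx, h1 x hx', hv x hx, h2 x hx'⟩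
  · obtain ⟨u, v, h⟩ := exists_isPosLogSol hL hd hτ hκ hA hB ((hstrict d).1 hlt)
    refine ⟨u, v, h, fun u' v' h' => ?_⟩
    have key := (IsSol.of_isNonnegLogSol hL h.1).unique (IsSol.of_isNonnegLogSol hL h'.1) hL hd hτ
      hκ hA hB continuousOn_const h.2.1 h'.2.1
    exact ⟨fun x hx => (key x hx).1, fun x hx => (key x hx).2⟩
  · rintro ⟨u, v, h⟩
    have hd : 0 < d := lt_of_lt_of_le (by positivity) hle
    exact (IsSol.of_isNonnegLogSol hL h.1).false_of_large_diffusion hL hκ hA hB hd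
      (not_lt.1 fun hlt => absurd ((hstrict d).2 hlt) hle.not_gt) (fun _ _ => le_rfl) h.2.1 h.2.2
end

section
/- Let χ, ϑ, A, d, τ > 0 and let Ω ⊂ ℝⁿ be a bounded open set. Consider the Monod-type steady-state system dΔu(x) − χu(x) + ϑ v(x)/(A + v(x)) = 0 and dΔv(x) + (1/τ)(u(x) − v(x)) = 0 for x ∈ Ω, with u = v = 0 on ∂Ω. Then: (i) any nonnegative classical solution satisfies 0 ≤ u(x) ≤ ϑ/χ and 0 ≤ v(x) ≤ ϑ/χ for all x ∈ Ω; (ii) the system has at most one positive classical solution. -/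
open Set

/-- The Laplacian of `f` at `x`: the trace of the second derivative. -/
noncomputable def Lap {n : ℕ} (f : EuclideanSpace ℝ (Fin n) → ℝ)
    (x : EuclideanSpace ℝ (Fin n)) : ℝ :=
  ∑ i : Fin n, iteratedFDeriv ℝ 2 f x ![EuclideanSpace.single i (1 : ℝ), EuclideanSpace.single i 1]

/-- A nonnegative classical solution of the Monod-type steady state system
dΔu − χu + ϑv/(A + v) = 0, dΔv + (1/τ)(u − v) = 0 in Ω, u = v = 0 on ∂Ω. -/
def IsNonnegMonodSol {n : ℕ} (Ω : Set (EuclideanSpace ℝ (Fin n)))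
    (χ ϑ A d τ : ℝ) (u v : EuclideanSpace ℝ (Fin n) → ℝ) : Prop :=
  ContinuousOn u (closure Ω) ∧ ContinuousOn v (closure Ω) ∧
  ContDiffOn ℝ 2 u Ω ∧ ContDiffOn ℝ 2 v Ω ∧
  (∀ x ∈ frontier Ω, u x = 0) ∧ (∀ x ∈ frontier Ω, v x = 0) ∧
  (∀ x ∈ Ω, 0 ≤ u x) ∧ (∀ x ∈ Ω, 0 ≤ v x) ∧
  (∀ x ∈ Ω, d * Lap u x - χ * u x + ϑ * v x / (A + v x) = 0) ∧
  (∀ x ∈ Ω, d * Lap v x + (1 / τ) * (u x - v x) = 0)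

/-- A positive classical solution of the Monod-type steady state system. -/
def IsPosMonodSol {n : ℕ} (Ω : Set (EuclideanSpace ℝ (Fin n)))
    (χ ϑ A d τ : ℝ) (u v : EuclideanSpace ℝ (Fin n) → ℝ) : Prop :=
  IsNonnegMonodSol Ω χ ϑ A d τ u v ∧ (∀ x ∈ Ω, 0 < u x) ∧ (∀ x ∈ Ω, 0 < v x)

open MeasureTheory Topology Filter

theorem hasDerivAt_max_zero_pow (k : ℕ) (t : ℝ) :
    HasDerivAt (fun s : ℝ => (max s 0) ^ (k + 2)) ((k + 2 : ℝ) * (max t 0) ^ (k + 1)) t := by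
  rcases lt_trichotomy t 0 with ht | rfl | ht
  · have h : (fun s : ℝ => (max s 0) ^ (k + 2)) =ᶠ[𝓝 t] fun _ => 0 := by
      filter_upwards [eventually_lt_nhds ht] with s hs
      simp [max_eq_right hs.le]
    simpa [max_eq_right ht.le] using (hasDerivAt_const t (0 : ℝ)).congr_of_eventuallyEq h
  · have h := hasDerivAt_pow (k + 2) (0 : ℝ)
    rw [hasDerivAt_iff_isLittleO] at h ⊢
    simp only [max_self, ne_eq, Nat.add_eq_zero_iff, OfNat.ofNat_ne_zero, and_false,
      not_false_eq_true, zero_pow, sub_zero, one_ne_zero, mul_zero,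
      smul_zero, show k + 2 - 1 = k + 1 from rfl] at h ⊢
    refine (Asymptotics.IsBigO.of_bound 1 (Eventually.of_forall fun s => ?_)).trans_isLittleO h
    rw [one_mul, norm_pow, norm_pow]
    refine pow_le_pow_left₀ (norm_nonneg _) ?_ _
    rcases le_total s 0 with hs | hs <;> simp [hs]
  · have h : (fun s : ℝ => (max s 0) ^ (k + 2)) =ᶠ[𝓝 t] fun s => s ^ (k + 2) := by
      filter_upwards [eventually_gt_nhds ht] with s hs
      simp [max_eq_left hs.le]
    simpa [max_eq_left ht.le] using (hasDerivAt_pow (k + 2) t).congr_of_eventuallyEq h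

theorem contDiff_one_max_zero_sq : ContDiff ℝ 1 fun s : ℝ => (max s 0) ^ 2 := by
  rw [contDiff_one_iff_deriv]
  refine ⟨fun t => (hasDerivAt_max_zero_pow 0 t).differentiableAt, ?_⟩
  rw [show deriv (fun s : ℝ => (max s 0) ^ 2) = fun t => (((0 : ℕ) : ℝ) + 2) * (max t 0) ^ 1 from
    funext fun t => (hasDerivAt_max_zero_pow 0 t).deriv]
  fun_prop

theorem contDiff_two_max_zero_cube : ContDiff ℝ 2 fun s : ℝ => (max s 0) ^ 3 := by
  rw [show (2 : WithTop ℕ∞) = 1 + 1 from rfl, contDiff_succ_iff_deriv]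
  refine ⟨fun t => (hasDerivAt_max_zero_pow 1 t).differentiableAt, by simp, ?_⟩
  rw [show deriv (fun s : ℝ => (max s 0) ^ 3) = fun t => (((1 : ℕ) : ℝ) + 2) * (max t 0) ^ 2 from
    funext fun t => (hasDerivAt_max_zero_pow 1 t).deriv]
  exact contDiff_const.mul contDiff_one_max_zero_sq

section Lap

variable {n : ℕ} {f g : EuclideanSpace ℝ (Fin n) → ℝ} {x : EuclideanSpace ℝ (Fin n)}

theorem differentiableAt_fderiv_of_contDiffAt_two (hf : ContDiffAt ℝ 2 f x) :
    DifferentiableAt ℝ (fderiv ℝ f) x :=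
  (hf.fderiv_right (m := 1) le_rfl).differentiableAt one_ne_zero

theorem eventually_differentiableAt_of_contDiffAt_two (hf : ContDiffAt ℝ 2 f x) :
    ∀ᶠ y in 𝓝 x, DifferentiableAt ℝ f y := by
  filter_upwards [hf.eventually (by simp)] with y hy
  exact hy.differentiableAt two_ne_zero

theorem fderiv_fderiv_apply_of_contDiffAt_two (hf : ContDiffAt ℝ 2 f x)
    (e e' : EuclideanSpace ℝ (Fin n)) :
    fderiv ℝ (fun y => fderiv ℝ f y e) x e' = fderiv ℝ (fderiv ℝ f) x e' e := by
  rw [fderiv_clm_apply (differentiableAt_fderiv_of_contDiffAt_two hf)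
    (differentiableAt_const e)]
  simp

theorem Lap_eq_sum_fderiv_fderiv (f : EuclideanSpace ℝ (Fin n) → ℝ)
    (x : EuclideanSpace ℝ (Fin n)) :
    Lap f x = ∑ i : Fin n, fderiv ℝ (fderiv ℝ f) x (EuclideanSpace.single i 1)
      (EuclideanSpace.single i 1) := by
  simp [Lap, iteratedFDeriv_two_apply]

theorem Lap_sub (hf : ContDiffAt ℝ 2 f x) (hg : ContDiffAt ℝ 2 g x) :
    Lap (fun y => f y - g y) x = Lap f x - Lap g x := by
  have h : fderiv ℝ (fun y => f y - g y) =ᶠ[𝓝 x] fun y => fderiv ℝ f y - fderiv ℝ g y := by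
    filter_upwards [eventually_differentiableAt_of_contDiffAt_two hf,
      eventually_differentiableAt_of_contDiffAt_two hg] with y hy hy'
    exact fderiv_fun_sub hy hy'
  simp_rw [Lap_eq_sum_fderiv_fderiv, h.fderiv_eq,
    fderiv_fun_sub (differentiableAt_fderiv_of_contDiffAt_two hf)
      (differentiableAt_fderiv_of_contDiffAt_two hg), sub_apply,
    Finset.sum_sub_distrib]

theorem Lap_const_mul (hf : ContDiffAt ℝ 2 f x) (c : ℝ) :
    Lap (fun y => c * f y) x = c * Lap f x := by
  have h : fderiv ℝ (fun y => c * f y) =ᶠ[𝓝 x] fun y => c • fderiv ℝ f y := by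
    filter_upwards [eventually_differentiableAt_of_contDiffAt_two hf] with y hy
    exact fderiv_const_mul hy c
  simp_rw [Lap_eq_sum_fderiv_fderiv, h.fderiv_eq,
    fderiv_fun_const_smul (differentiableAt_fderiv_of_contDiffAt_two hf) c,
    smul_apply, smul_eq_mul, Finset.mul_sum]

theorem Lap_congr (h : f =ᶠ[𝓝 x] g) : Lap f x = Lap g x := by
  simp_rw [Lap_eq_sum_fderiv_fderiv, h.fderiv.fderiv_eq]

/-- The Laplacian is nonpositive at a local maximum. -/
theorem Lap_nonpos_of_isLocalMax (hf : ContDiffAt ℝ 2 f x) (hmax : IsLocalMax f x) :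
    Lap f x ≤ 0 := by
  rw [Lap_eq_sum_fderiv_fderiv]
  refine Finset.sum_nonpos fun i _ => ?_
  set e : EuclideanSpace ℝ (Fin n) := EuclideanSpace.single i 1
  have hline : ∀ t : ℝ, HasDerivAt (fun s : ℝ => x + s • e) e t := fun t => by
    simpa using ((hasDerivAt_id t).smul_const e).const_add x
  have htend : Tendsto (fun s : ℝ => x + s • e) (𝓝 0) (𝓝 x) := by
    simpa using (hline 0).continuousAt.tendsto
  have hg : deriv (fun s : ℝ => f (x + s • e)) =ᶠ[𝓝 0] fun s => fderiv ℝ f (x + s • e) e := by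
    filter_upwards [htend.eventually (eventually_differentiableAt_of_contDiffAt_two hf)] with s hs
    exact (hs.hasFDerivAt.comp_hasDerivAt s (hline s)).deriv
  have hg2 : HasDerivAt (deriv fun s : ℝ => f (x + s • e))
      (fderiv ℝ (fderiv ℝ f) x e e) 0 := by
    refine HasDerivAt.congr_of_eventuallyEq ?_ hg
    have h1 : HasFDerivAt (fun y => fderiv ℝ f y e) (fderiv ℝ (fun y => fderiv ℝ f y e) x)
        (x + (0 : ℝ) • e) := by
      rw [zero_smul, add_zero]
      exact ((differentiableAt_fderiv_of_contDiffAt_two hf).clm_apply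
        (differentiableAt_const e)).hasFDerivAt
    rw [← fderiv_fderiv_apply_of_contDiffAt_two hf]
    exact h1.comp_hasDerivAt (0 : ℝ) (hline 0)
  have hlocmax : IsLocalMax (fun s : ℝ => f (x + s • e)) 0 := by
    have := htend.eventually hmax
    simpa [IsLocalMax, IsMaxFilter] using this
  by_contra! hpos
  have hcont : ContinuousAt (fun s : ℝ => f (x + s • e)) 0 :=
    ContinuousAt.comp_of_eq hf.continuousAt (hline 0).continuousAt (by simp)
  have hlocmin := isLocalMin_of_deriv_deriv_pos (by rw [hg2.deriv]; exact hpos)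
    hlocmax.deriv_eq_zero hcont
  have hconst : (fun s : ℝ => f (x + s • e)) =ᶠ[𝓝 0] fun _ => f (x + (0 : ℝ) • e) := by
    filter_upwards [hlocmax, hlocmin] with s h1 h2
    exact le_antisymm h1 h2
  have := hconst.deriv.deriv_eq
  rw [hg2.deriv] at this
  simp at this
  exact hpos.ne' this

/-- A lower bound for the Laplacian of the cube of the positive part. -/
theorem le_Lap_max_zero_cube (hf : ContDiffAt ℝ 2 f x) :
    3 * (max (f x) 0) ^ 2 * Lap f x ≤ Lap (fun y => (max (f y) 0) ^ 3) x := by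
  have h : fderiv ℝ (fun y => (max (f y) 0) ^ 3) =ᶠ[𝓝 x]
      fun y => (3 * (max (f y) 0) ^ 2) • fderiv ℝ f y := by
    filter_upwards [eventually_differentiableAt_of_contDiffAt_two hf] with y hy
    have := ((hasDerivAt_max_zero_pow 1 (f y)).comp_hasFDerivAt y hy.hasFDerivAt).fderiv
    norm_num [Function.comp_def] at this
    exact this
  have h2 : HasFDerivAt (fun y => 3 * (max (f y) 0) ^ 2)
      ((6 * max (f x) 0) • fderiv ℝ f x) x := by
    have := ((hasDerivAt_max_zero_pow 0 (f x)).comp_hasFDerivAt x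
      (hf.differentiableAt two_ne_zero).hasFDerivAt).const_mul 3
    norm_num [Function.comp_def, smul_smul, ← mul_assoc] at this
    exact this
  rw [Lap_eq_sum_fderiv_fderiv, Lap_eq_sum_fderiv_fderiv, Finset.mul_sum, h.fderiv_eq,
    (h2.fun_smul (differentiableAt_fderiv_of_contDiffAt_two hf).hasFDerivAt).fderiv]
  refine Finset.sum_le_sum fun i _ => ?_
  simp
  have := le_max_right (f x) 0
  have := mul_nonneg this (mul_self_nonneg (fderiv ℝ f x (EuclideanSpace.single i 1)))
  nlinarith

end Lap

section MeanValue

variable {n : ℕ}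

/-- The radial kernel `(1 - ‖y‖²)₊ᵏ`. -/
noncomputable def radialKernel (k : ℕ) (y : EuclideanSpace ℝ (Fin n)) : ℝ :=
  (max (1 - ‖y‖ ^ 2) 0) ^ k

theorem continuous_radialKernel (k : ℕ) :
    Continuous (radialKernel k : EuclideanSpace ℝ (Fin n) → ℝ) := by
  unfold radialKernel
  fun_prop

theorem radialKernel_nonneg (k : ℕ) (y : EuclideanSpace ℝ (Fin n)) : 0 ≤ radialKernel k y :=
  pow_nonneg (le_max_right _ _) _

theorem max_one_sub_norm_sq_le_one (y : EuclideanSpace ℝ (Fin n)) :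
    max (1 - ‖y‖ ^ 2) 0 ≤ 1 :=
  max_le (by nlinarith [sq_nonneg ‖y‖]) zero_le_one

theorem radialKernel_le_one (k : ℕ) (y : EuclideanSpace ℝ (Fin n)) : radialKernel k y ≤ 1 :=
  pow_le_one₀ (le_max_right _ _) (max_one_sub_norm_sq_le_one y)

theorem radialKernel_succ_le (k : ℕ) (y : EuclideanSpace ℝ (Fin n)) :
    radialKernel (k + 1) y ≤ radialKernel k y :=
  pow_le_pow_of_le_one (le_max_right _ _) (max_one_sub_norm_sq_le_one y) (Nat.le_succ k)

theorem radialKernel_eq_zero {k : ℕ} (hk : k ≠ 0) {y : EuclideanSpace ℝ (Fin n)}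
    (hy : 1 ≤ ‖y‖) : radialKernel k y = 0 := by
  rw [radialKernel, max_eq_right (by nlinarith), zero_pow hk]

theorem hasCompactSupport_radialKernel {k : ℕ} (hk : k ≠ 0) :
    HasCompactSupport (radialKernel k : EuclideanSpace ℝ (Fin n) → ℝ) :=
  HasCompactSupport.intro (isCompact_closedBall 0 1) fun y hy =>
    radialKernel_eq_zero hk (by simpa using (not_le.1 fun h => hy (by simpa using h)).le)

theorem integrable_radialKernel_mul {k : ℕ} (hk : k ≠ 0) {g : EuclideanSpace ℝ (Fin n) → ℝ}
    (hg : Continuous g) : Integrable fun y => radialKernel k y * g y :=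
  ((continuous_radialKernel k).mul hg).integrable_of_hasCompactSupport
    (hasCompactSupport_radialKernel hk).mul_right

theorem integrable_radialKernel {k : ℕ} (hk : k ≠ 0) :
    Integrable (radialKernel k : EuclideanSpace ℝ (Fin n) → ℝ) :=
  (continuous_radialKernel k).integrable_of_hasCompactSupport (hasCompactSupport_radialKernel hk)

theorem integral_radialKernel_pos {k : ℕ} (hk : k ≠ 0) :
    0 < ∫ y : EuclideanSpace ℝ (Fin n), radialKernel k y :=
  (continuous_radialKernel k).integral_pos_of_hasCompactSupport_nonneg_nonzero
    (hasCompactSupport_radialKernel hk) (radialKernel_nonneg k) (x := 0) (by simp [radialKernel])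

theorem hasFDerivAt_radialKernel (k : ℕ) (y : EuclideanSpace ℝ (Fin n)) :
    HasFDerivAt (radialKernel (k + 2))
      (((k + 2 : ℝ) * radialKernel (k + 1) y) • (-((2 : ℕ) • innerSL ℝ y) : EuclideanSpace ℝ (Fin n) →L[ℝ] ℝ)) y :=
  HasDerivAt.comp_hasFDerivAt (h₂ := fun s : ℝ => (max s 0) ^ (k + 2)) y
    (hasDerivAt_max_zero_pow k (1 - ‖y‖ ^ 2))
    ((hasStrictFDerivAt_norm_sq y).hasFDerivAt.const_sub 1)

/-- Integration by parts against the radial kernel. -/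
theorem integral_radialKernel_mul_fderiv {f : EuclideanSpace ℝ (Fin n) → ℝ} (hf : ContDiff ℝ 2 f)
    (x : EuclideanSpace ℝ (Fin n)) (s : ℝ) :
    ∫ y, radialKernel 2 y * fderiv ℝ f (x + s • y) y =
      s / 6 * ∫ y, radialKernel 3 y * Lap f (x + s • y) := by
  have hf1 : ContDiff ℝ 1 (fderiv ℝ f) := hf.fderiv_right (m := 1) le_rfl
  have hcont1 : Continuous (fderiv ℝ f) := hf1.continuous
  have hcont2 : Continuous (fderiv ℝ (fderiv ℝ f)) := hf1.continuous_fderiv one_ne_zero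
  have hparts : ∀ i : Fin n,
      ∫ y, radialKernel 2 y * (y i * fderiv ℝ f (x + s • y) (EuclideanSpace.single i 1)) =
      s / 6 * ∫ y, radialKernel 3 y * fderiv ℝ (fderiv ℝ f) (x + s • y)
        (EuclideanSpace.single i 1) (EuclideanSpace.single i 1) := by
    intro i
    set e : EuclideanSpace ℝ (Fin n) := EuclideanSpace.single i 1
    have hg : ∀ y, HasFDerivAt (fun y => fderiv ℝ f (x + s • y) e)
        (s • (fderiv ℝ (fun z => fderiv ℝ f z e) (x + s • y))) y := by
      intro y
      have h1 : HasFDerivAt (fun z => fderiv ℝ f z e)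
          (fderiv ℝ (fun z => fderiv ℝ f z e) (x + s • y)) (x + s • y) :=
        ((hf1.differentiable one_ne_zero _).clm_apply (differentiableAt_const e)).hasFDerivAt
      have h2 : HasFDerivAt (fun y : EuclideanSpace ℝ (Fin n) => x + s • y)
          (s • ContinuousLinearMap.id ℝ _) y := ((hasFDerivAt_id y).const_smul s).const_add x
      have h3 := h1.comp y h2
      rwa [ContinuousLinearMap.comp_smul, ContinuousLinearMap.comp_id] at h3
    have hg' : ∀ y, fderiv ℝ (fun y => fderiv ℝ f (x + s • y) e) y e =
        s * fderiv ℝ (fderiv ℝ f) (x + s • y) e e := by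
      intro y
      rw [(hg y).fderiv, smul_apply, fderiv_fderiv_apply_of_contDiffAt_two hf.contDiffAt,
        smul_eq_mul]
    have hP : ∀ y, fderiv ℝ (radialKernel 3) y e = -6 * (radialKernel 2 y * y i) := by
      intro y
      rw [(hasFDerivAt_radialKernel 1 y).fderiv]
      simp [e, EuclideanSpace.inner_single_right]
      ring
    have hi : ∀ y : EuclideanSpace ℝ (Fin n), fderiv ℝ (radialKernel 3) y e *
        fderiv ℝ f (x + s • y) e =
        -6 * (radialKernel 2 y * (y i * fderiv ℝ f (x + s • y) e)) := by
      intro y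
      rw [hP]
      ring
    have key := integral_mul_fderiv_eq_neg_fderiv_mul_of_integrable (μ := volume)
      (f := (radialKernel 3 : EuclideanSpace ℝ (Fin n) → ℝ))
      (g := fun y => fderiv ℝ f (x + s • y) e) (v := e)
      (by
        simp_rw [hi]
        exact (integrable_radialKernel_mul two_ne_zero (by fun_prop)).const_mul _)
      (by
        simp_rw [hg']
        exact integrable_radialKernel_mul three_ne_zero (by fun_prop))
      (integrable_radialKernel_mul three_ne_zero (by fun_prop))
      (fun y _ => (hasFDerivAt_radialKernel 1 y).differentiableAt)
      (fun y _ => (hg y).differentiableAt)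
    simp_rw [hi, hg', mul_left_comm _ s, integral_const_mul] at key
    linarith
  have hexp : ∀ y : EuclideanSpace ℝ (Fin n), radialKernel 2 y * fderiv ℝ f (x + s • y) y =
      ∑ i : Fin n, radialKernel 2 y *
        (y i * fderiv ℝ f (x + s • y) (EuclideanSpace.single i 1)) := by
    intro y
    rw [← Finset.mul_sum]
    congr 1
    generalize fderiv ℝ f (x + s • y) = L
    conv_lhs => rw [← (EuclideanSpace.basisFun (Fin n) ℝ).sum_repr y]
    simp [map_sum]
  simp_rw [hexp, Lap_eq_sum_fderiv_fderiv, Finset.mul_sum]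
  rw [integral_finsetSum _ fun i _ => integrable_radialKernel_mul two_ne_zero (by fun_prop),
    integral_finsetSum _ fun i _ => integrable_radialKernel_mul three_ne_zero (by fun_prop),
    Finset.mul_sum]
  exact Finset.sum_congr rfl fun i _ => hparts i

theorem hasDerivAt_integral_radialKernel_mul {f : EuclideanSpace ℝ (Fin n) → ℝ}
    (hf : ContDiff ℝ 1 f) (hsupp : HasCompactSupport f) (x : EuclideanSpace ℝ (Fin n)) (s : ℝ) :
    HasDerivAt (fun t => ∫ y, radialKernel 2 y * f (x + t • y))
      (∫ y, radialKernel 2 y * fderiv ℝ f (x + s • y) y) s := by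
  have hcont : Continuous f := hf.continuous
  have hcont1 : Continuous (fderiv ℝ f) := hf.continuous_fderiv one_ne_zero
  obtain ⟨C, hC⟩ := hcont1.bounded_above_of_compact_support (hsupp.fderiv ℝ)
  refine (hasDerivAt_integral_of_dominated_loc_of_deriv_le (μ := volume)
    (F := fun t y => radialKernel 2 y * f (x + t • y))
    (F' := fun t y => radialKernel 2 y * fderiv ℝ f (x + t • y) y)
    (bound := fun y => radialKernel 2 y * C) univ_mem
    (Eventually.of_forall fun t =>
      (integrable_radialKernel_mul two_ne_zero (by fun_prop)).aestronglyMeasurable)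
    (integrable_radialKernel_mul two_ne_zero (by fun_prop))
    (integrable_radialKernel_mul two_ne_zero (by fun_prop)).aestronglyMeasurable
    (Eventually.of_forall fun y t _ => ?_)
    (integrable_radialKernel_mul two_ne_zero (by fun_prop))
    (Eventually.of_forall fun y t _ => ?_)).2
  · rcases le_total 1 ‖y‖ with hy | hy
    · simp [radialKernel_eq_zero two_ne_zero hy]
    · rw [norm_mul, Real.norm_of_nonneg (radialKernel_nonneg 2 y)]
      refine mul_le_mul_of_nonneg_left ?_ (radialKernel_nonneg 2 y)
      calc ‖fderiv ℝ f (x + t • y) y‖ ≤ ‖fderiv ℝ f (x + t • y)‖ * ‖y‖ :=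
            ContinuousLinearMap.le_opNorm _ _
        _ ≤ C * 1 := mul_le_mul (hC _) hy (norm_nonneg _) ((norm_nonneg _).trans (hC 0))
        _ = C := mul_one C
  · have hline : HasDerivAt (fun t : ℝ => x + t • y) y t := by
      simpa using ((hasDerivAt_id t).smul_const y).const_add x
    exact (((hf.differentiable one_ne_zero _).hasFDerivAt.comp_hasDerivAt t hline).const_mul _)

/-- A weighted mean value inequality for functions with Laplacian bounded below. -/
theorem mul_integral_radialKernel_le {f : EuclideanSpace ℝ (Fin n) → ℝ} (hf : ContDiff ℝ 2 f)
    (hsupp : HasCompactSupport f) {M : ℝ} (hM : ∀ z, -M ≤ Lap f z)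
    (x : EuclideanSpace ℝ (Fin n)) {r : ℝ} (hr : 0 ≤ r) :
    f x * ∫ y : EuclideanSpace ℝ (Fin n), radialKernel 2 y ≤
      (∫ y, radialKernel 2 y * f (x + r • y)) +
        M * r ^ 2 / 12 * ∫ y : EuclideanSpace ℝ (Fin n), radialKernel 3 y := by
  set I : ℝ := ∫ y : EuclideanSpace ℝ (Fin n), radialKernel 3 y
  have hcontLap : Continuous (Lap f) := by
    have hcont2 : Continuous (fderiv ℝ (fderiv ℝ f)) :=
      (hf.fderiv_right (m := 1) le_rfl).continuous_fderiv one_ne_zero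
    simp_rw [funext (Lap_eq_sum_fderiv_fderiv f)]
    fun_prop
  have hderiv : ∀ s : ℝ, HasDerivAt
      (fun t => (∫ y, radialKernel 2 y * f (x + t • y)) + M * t ^ 2 / 12 * I)
      (s / 6 * (∫ y, radialKernel 3 y * Lap f (x + s • y)) + M * s / 6 * I) s := by
    intro s
    have h := hasDerivAt_integral_radialKernel_mul (hf.of_le one_le_two) hsupp x s
    rw [integral_radialKernel_mul_fderiv hf] at h
    refine h.add
      ((((hasDerivAt_pow 2 s).const_mul M).div_const 12).mul_const I |>.congr_deriv ?_)
    rw [show 2 - 1 = 1 from rfl]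
    push_cast
    ring
  have hmono := monotoneOn_of_deriv_nonneg (convex_Ici (0 : ℝ))
    (fun s _ => (hderiv s).continuousAt.continuousWithinAt)
    (fun s _ => (hderiv s).differentiableAt.differentiableWithinAt)
    (fun s hs => by
      rw [(hderiv s).deriv]
      have hs0 : 0 < s := by simpa using hs
      have hle : -M * I ≤ ∫ y, radialKernel 3 y * Lap f (x + s • y) := by
        rw [← integral_const_mul]
        refine integral_mono ((integrable_radialKernel three_ne_zero).const_mul _)
          (integrable_radialKernel_mul three_ne_zero (by fun_prop)) fun y => ?_
        have := mul_le_mul_of_nonneg_left (hM (x + s • y)) (radialKernel_nonneg 3 y)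
        simp only
        linarith
      nlinarith)
  have := hmono (mem_Ici.2 le_rfl) (mem_Ici.2 hr) hr
  simpa [integral_const_mul, mul_comm] using this

end MeanValue

section SmallMeasure

variable {n : ℕ}

theorem volume_preimage_add_smul (x : EuclideanSpace ℝ (Fin n)) {r : ℝ} (hr : 0 < r)
    (O : Set (EuclideanSpace ℝ (Fin n))) :
    volume ((fun y : EuclideanSpace ℝ (Fin n) => x + r • y) ⁻¹' O) =
      ENNReal.ofReal (r ^ n)⁻¹ * volume O := by
  have h : (fun y : EuclideanSpace ℝ (Fin n) => x + r • y) ⁻¹' O =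
      (r • ·) ⁻¹' ((x + ·) ⁻¹' O) := rfl
  rw [h, Measure.addHaar_preimage_smul _ hr.ne', measure_preimage_add, finrank_euclideanSpace_fin,
    abs_of_nonneg (by positivity)]

/-- Let `w` be a function on a set `O` of small measure, nonpositive on the boundary of `O`. Then
a positive upper bound `m` of `w` with `-Δw ≤ c m` is not attained. -/
theorem exists_measure_bound_not_attained (n : ℕ) {c : ℝ} (hc : 0 < c) :
    ∃ δ : ℝ, 0 < δ ∧ ∀ (O : Set (EuclideanSpace ℝ (Fin n))), IsOpen O → Bornology.IsBounded O →
      volume O ≤ ENNReal.ofReal δ → ∀ (w : EuclideanSpace ℝ (Fin n) → ℝ) (m : ℝ), 0 < m →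
      ContinuousOn w (closure O) → ContDiffOn ℝ 2 w O → (∀ x ∈ frontier O, w x ≤ 0) →
      (∀ x ∈ O, w x ≤ m) → (∀ x ∈ O, 0 < w x → -(c * m) ≤ Lap w x) →
      ∀ x ∈ O, w x ≠ m := by
  set J : ℝ := ∫ y : EuclideanSpace ℝ (Fin n), radialKernel 2 y
  have hJ : 0 < J := integral_radialKernel_pos two_ne_zero
  set r : ℝ := (√c)⁻¹
  have hr : 0 < r := by positivity
  have hcr : c * r ^ 2 = 1 := by
    rw [inv_pow, Real.sq_sqrt hc.le, mul_inv_cancel₀ hc.ne']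
  refine ⟨r ^ n * J / 4, by positivity, ?_⟩
  intro O hO hOb hvol w m hm hwc hw hwf hwm hLap x₀ hx₀ hx₀m
  set ε : ℝ := m / 10 with hε
  have hε0 : 0 < ε := by positivity
  set S : Set (EuclideanSpace ℝ (Fin n)) := closure O ∩ w ⁻¹' Ici ε
  have hScl : IsClosed S := hwc.preimage_isClosed_of_isClosed isClosed_closure isClosed_Ici
  have hSc : IsCompact S :=
    hOb.isCompact_closure.of_isClosed_subset hScl inter_subset_left
  have hSO : S ⊆ O := by
    rintro x ⟨hx, hxε⟩
    by_contra hxO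
    have := hwf x ⟨hx, by rwa [hO.interior_eq]⟩
    exact absurd ((show ε ≤ w x from hxε).trans this) (not_le.2 hε0)
  set η : EuclideanSpace ℝ (Fin n) → ℝ := O.indicator fun x => (max (w x - ε) 0) ^ 3 with hη
  have hη0 : ∀ x ∉ S, η x = 0 := by
    intro x hx
    by_cases hxO : x ∈ O
    · have : w x < ε := not_le.1 fun h => hx ⟨subset_closure hxO, h⟩
      simp [hη, hxO, max_eq_right (sub_nonpos.2 this.le)]
    · simp [hη, hxO]
  have hηO : ∀ x ∈ O, η =ᶠ[𝓝 x] fun x => (max (w x - ε) 0) ^ 3 := by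
    intro x hx
    filter_upwards [hO.mem_nhds hx] with y hy
    simp [hη, hy]
  have hηS : ∀ x ∉ O, η =ᶠ[𝓝 x] fun _ => 0 := by
    intro x hx
    filter_upwards [hScl.isOpen_compl.mem_nhds fun h => hx (hSO h)] with y hy
    exact hη0 y hy
  have hwat : ∀ x ∈ O, ContDiffAt ℝ 2 (fun y => w y - ε) x := fun x hx =>
    (hw.contDiffAt (hO.mem_nhds hx)).sub contDiffAt_const
  have hηC : ContDiff ℝ 2 η := by
    rw [contDiff_iff_contDiffAt]
    intro x
    by_cases hx : x ∈ O
    · exact (contDiff_two_max_zero_cube.contDiffAt.comp x (hwat x hx)).congr_of_eventuallyEq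
        (hηO x hx)
    · exact contDiffAt_const.congr_of_eventuallyEq (hηS x hx)
  have hηsupp : HasCompactSupport η := HasCompactSupport.intro hSc hη0
  have hηLap : ∀ x, -(3 * c * m ^ 3) ≤ Lap η x := by
    intro x
    by_cases hx : x ∈ O
    · rw [Lap_congr (hηO x hx)]
      refine le_trans ?_ (le_Lap_max_zero_cube (hwat x hx))
      have hL : Lap (fun y => w y - ε) x = Lap w x := by
        rw [Lap_sub (hw.contDiffAt (hO.mem_nhds hx)) contDiffAt_const]
        simp [Lap_eq_sum_fderiv_fderiv]
      rw [hL]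
      rcases le_total (w x) ε with hwx | hwx
      · rw [max_eq_right (sub_nonpos.2 hwx)]
        simp only [ne_eq, OfNat.ofNat_ne_zero, not_false_eq_true, zero_pow, mul_zero, zero_mul]
        have : 0 < 3 * c * m ^ 3 := by positivity
        linarith
      · have h1 := hLap x hx (by linarith)
        have h2 : 0 ≤ max (w x - ε) 0 := le_max_right _ _
        have h3 : max (w x - ε) 0 ≤ m := max_le (by linarith [hwm x hx]) hm.le
        have h4 : (max (w x - ε) 0) ^ 2 ≤ m ^ 2 := pow_le_pow_left₀ h2 h3 2
        calc -(3 * c * m ^ 3) = -(3 * (c * m) * m ^ 2) := by ring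
          _ ≤ -(3 * (c * m) * (max (w x - ε) 0) ^ 2) := by gcongr
          _ = 3 * (max (w x - ε) 0) ^ 2 * -(c * m) := by ring
          _ ≤ _ := by gcongr
    · rw [Lap_congr (hηS x hx)]
      have : 0 < 3 * c * m ^ 3 := by positivity
      simp [Lap_eq_sum_fderiv_fderiv]
      linarith
  have hmv := mul_integral_radialKernel_le hηC hηsupp hηLap x₀ hr.le
  set T : Set (EuclideanSpace ℝ (Fin n)) :=
    (fun y : EuclideanSpace ℝ (Fin n) => x₀ + r • y) ⁻¹' O
  have hT : MeasurableSet T := hO.measurableSet.preimage (by fun_prop)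
  have hTvol : volume T ≤ ENNReal.ofReal (J / 4) := by
    rw [volume_preimage_add_smul x₀ hr]
    calc _ ≤ ENNReal.ofReal (r ^ n)⁻¹ * ENNReal.ofReal (r ^ n * J / 4) := by gcongr
      _ = _ := by
        rw [← ENNReal.ofReal_mul (by positivity)]
        congr 1
        field_simp
  have hTreal : volume.real T ≤ J / 4 := ENNReal.toReal_le_of_le_ofReal (by positivity) hTvol
  have hint : ∫ y, radialKernel 2 y * η (x₀ + r • y) ≤ J / 4 * m ^ 3 := by
    calc ∫ y, radialKernel 2 y * η (x₀ + r • y) ≤ ∫ y, T.indicator (fun _ => m ^ 3) y := by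
          refine integral_mono (integrable_radialKernel_mul two_ne_zero
            (hηC.continuous.comp (by fun_prop)))
            ((integrable_indicator_iff hT).2 (integrableOn_const
              (hTvol.trans_lt ENNReal.ofReal_lt_top).ne)) fun y => ?_
          by_cases hy : x₀ + r • y ∈ O
          · have h2 : 0 ≤ max (w (x₀ + r • y) - ε) 0 := le_max_right _ _
            have h3 : max (w (x₀ + r • y) - ε) 0 ≤ m :=
              max_le (by linarith [hwm _ hy]) hm.le
            have h4 := pow_le_pow_left₀ h2 h3 3
            simp only [hη, indicator_of_mem hy, indicator_of_mem (show y ∈ T from hy)]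
            calc _ ≤ 1 * m ^ 3 := mul_le_mul (radialKernel_le_one 2 y) h4 (by positivity)
                  zero_le_one
              _ = m ^ 3 := one_mul _
          · simp [hη, indicator_of_notMem hy, indicator_of_notMem (show y ∉ T from hy)]
      _ = volume.real T * m ^ 3 := by
          rw [integral_indicator hT, setIntegral_const, smul_eq_mul]
      _ ≤ J / 4 * m ^ 3 := by gcongr
  have hJ3 : ∫ y : EuclideanSpace ℝ (Fin n), radialKernel 3 y ≤ J :=
    integral_mono (integrable_radialKernel three_ne_zero) (integrable_radialKernel two_ne_zero)
      (radialKernel_succ_le 2)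
  have hηx₀ : η x₀ = (9 / 10 * m) ^ 3 := by
    simp only [hη, indicator_of_mem hx₀, hx₀m]
    rw [max_eq_left (by rw [hε]; linarith), hε]
    ring
  have hlast : 3 * c * m ^ 3 * r ^ 2 / 12 * ∫ y : EuclideanSpace ℝ (Fin n), radialKernel 3 y ≤
      m ^ 3 / 4 * J := by
    rw [show 3 * c * m ^ 3 * r ^ 2 / 12 = m ^ 3 / 4 * (c * r ^ 2) by ring, hcr, mul_one]
    gcongr
  rw [hηx₀] at hmv
  have hpos : 0 < m ^ 3 * J := by positivity
  nlinarith

end SmallMeasure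

section MaximumPrinciple

variable {n : ℕ} {O : Set (EuclideanSpace ℝ (Fin n))}

theorem Lap_nonpos_of_isMaxOn (hO : IsOpen O) {f : EuclideanSpace ℝ (Fin n) → ℝ}
    (hf : ContDiffOn ℝ 2 f O) {x : EuclideanSpace ℝ (Fin n)} (hx : x ∈ O)
    (hmax : ∀ y ∈ O, f y ≤ f x) : Lap f x ≤ 0 :=
  Lap_nonpos_of_isLocalMax (hf.contDiffAt (hO.mem_nhds hx))
    (IsMaxOn.isLocalMax (fun y hy => hmax y hy) (hO.mem_nhds hx))

/-- An upper bound valid on the boundary and at points where the Laplacian is nonpositive is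
valid everywhere. -/
theorem le_of_frontier_le_of_Lap_nonpos_le (hO : IsOpen O) (hOb : Bornology.IsBounded O)
    {f : EuclideanSpace ℝ (Fin n) → ℝ} (hfc : ContinuousOn f (closure O))
    (hf : ContDiffOn ℝ 2 f O) {B : ℝ} (hfr : ∀ x ∈ frontier O, f x ≤ B)
    (hB : ∀ x ∈ O, Lap f x ≤ 0 → f x ≤ B) {x : EuclideanSpace ℝ (Fin n)} (hx : x ∈ O) :
    f x ≤ B := by
  obtain ⟨x₀, hx₀, hmax⟩ := hOb.isCompact_closure.exists_isMaxOn ⟨x, subset_closure hx⟩ hfc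
  refine (hmax (subset_closure hx)).trans ?_
  by_cases hxO : x₀ ∈ O
  · exact hB x₀ hxO (Lap_nonpos_of_isMaxOn hO hf hxO fun y hy => hmax (subset_closure hy))
  · exact hfr x₀ ⟨hx₀, by rwa [hO.interior_eq]⟩

/-- The maximum principle for cooperative systems of two equations on sets of small measure. -/
theorem exists_measure_bound_system_nonpos (n : ℕ) {c : ℝ} (hc : 0 < c) :
    ∃ δ : ℝ, 0 < δ ∧ ∀ (O : Set (EuclideanSpace ℝ (Fin n))), IsOpen O → Bornology.IsBounded O →
      volume O ≤ ENNReal.ofReal δ → ∀ P Q : EuclideanSpace ℝ (Fin n) → ℝ,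
      ContinuousOn P (closure O) → ContinuousOn Q (closure O) →
      ContDiffOn ℝ 2 P O → ContDiffOn ℝ 2 Q O →
      (∀ x ∈ frontier O, P x ≤ 0 ∧ Q x ≤ 0) →
      (∀ x ∈ O, 0 < P x → -(c * max (Q x) 0) ≤ Lap P x) →
      (∀ x ∈ O, 0 < Q x → -(c * max (P x) 0) ≤ Lap Q x) →
      ∀ x ∈ O, P x ≤ 0 ∧ Q x ≤ 0 := by
  obtain ⟨δ, hδ, H⟩ := exists_measure_bound_not_attained n hc
  refine ⟨δ, hδ, fun O hO hOb hvol P Q hPc hQc hP hQ hfr hPL hQL x hx => ?_⟩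
  obtain ⟨x₀, hx₀, hmax⟩ := hOb.isCompact_closure.exists_isMaxOn ⟨x, subset_closure hx⟩
    (f := fun y => max (P y) (Q y)) (hPc.sup hQc)
  set m : ℝ := max (P x₀) (Q x₀)
  have hle : ∀ y ∈ O, max (P y) (Q y) ≤ m := fun y hy => hmax (subset_closure hy)
  rcases le_or_gt m 0 with hm | hm
  · exact max_le_iff.1 ((hle x hx).trans hm)
  exfalso
  have hx₀O : x₀ ∈ O := by
    by_contra h
    have := hfr x₀ ⟨hx₀, by rwa [hO.interior_eq]⟩
    exact hm.not_ge (max_le this.1 this.2)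
  have hlow : ∀ s : ℝ, s ≤ m → -(c * m) ≤ -(c * max s 0) := fun s hs =>
    neg_le_neg (mul_le_mul_of_nonneg_left (max_le hs hm.le) hc.le)
  have hPm : ∀ y ∈ O, P y ≤ m := fun y hy => (le_max_left _ _).trans (hle y hy)
  have hQm : ∀ y ∈ O, Q y ≤ m := fun y hy => (le_max_right _ _).trans (hle y hy)
  rcases max_choice (P x₀) (Q x₀) with h | h
  · exact H O hO hOb hvol P m hm hPc hP (fun y hy => (hfr y hy).1) hPm
      (fun y hy hy0 => (hlow _ (hQm y hy)).trans (hPL y hy hy0)) x₀ hx₀O h.symm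
  · exact H O hO hOb hvol Q m hm hQc hQ (fun y hy => (hfr y hy).2) hQm
      (fun y hy hy0 => (hlow _ (hPm y hy)).trans (hQL y hy hy0)) x₀ hx₀O h.symm

end MaximumPrinciple

section Monod

variable {n : ℕ} {Ω : Set (EuclideanSpace ℝ (Fin n))} {χ ϑ A d τ : ℝ}

theorem IsNonnegMonodSol.le_div (hΩo : IsOpen Ω) (hΩb : Bornology.IsBounded Ω)
    (hχ : 0 < χ) (hϑ : 0 < ϑ) (hA : 0 < A) (hd : 0 < d) (hτ : 0 < τ)
    {u v : EuclideanSpace ℝ (Fin n) → ℝ} (h : IsNonnegMonodSol Ω χ ϑ A d τ u v)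
    {x : EuclideanSpace ℝ (Fin n)} (hx : x ∈ Ω) : u x ≤ ϑ / χ ∧ v x ≤ ϑ / χ := by
  obtain ⟨huc, hvc, hu, hv, hu0, hv0, hun, hvn, heu, hev⟩ := h
  have hB : 0 ≤ ϑ / χ := by positivity
  have hule : ∀ y ∈ Ω, u y ≤ ϑ / χ := fun y hy =>
    le_of_frontier_le_of_Lap_nonpos_le hΩo hΩb huc hu (fun z hz => (hu0 z hz).trans_le hB)
      (fun z hz hL => by
        have hAv : 0 < A + v z := add_pos_of_pos_of_nonneg hA (hvn z hz)
        have hfrac : ϑ * v z / (A + v z) ≤ ϑ := by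
          rw [div_le_iff₀ hAv]
          nlinarith
        rw [le_div_iff₀ hχ]
        nlinarith [heu z hz, mul_nonneg hd.le (neg_nonneg.2 hL)]) hy
  refine ⟨hule x hx, le_of_frontier_le_of_Lap_nonpos_le hΩo hΩb hvc hv
    (fun z hz => (hv0 z hz).trans_le hB) (fun z hz hL => le_trans ?_ (hule z hz)) hx⟩
  have h1 : 0 ≤ 1 / τ * (u z - v z) := by nlinarith [hev z hz, mul_nonneg hd.le (neg_nonneg.2 hL)]
  linarith [nonneg_of_mul_nonneg_right h1 (by positivity)]

theorem monod_sub_identity (hA : 0 < A) {a b t : ℝ} (ha : 0 ≤ a) (hb : 0 ≤ b) :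
    (1 - t) * (ϑ * a / (A + a)) - ϑ * b / (A + b) =
      ϑ * A / ((A + a) * (A + b)) * (a - b - t * a) - t * (ϑ * a * b / ((A + a) * (A + b))) := by
  have h1 : A + a ≠ 0 := by positivity
  have h2 : A + b ≠ 0 := by positivity
  field_simp
  ring

/-- Every positive solution lies below every other positive solution. -/
theorem IsPosMonodSol.le (hΩo : IsOpen Ω) (hΩb : Bornology.IsBounded Ω)
    (hχ : 0 < χ) (hϑ : 0 < ϑ) (hA : 0 < A) (hd : 0 < d) (hτ : 0 < τ)
    {u₁ v₁ u₂ v₂ : EuclideanSpace ℝ (Fin n) → ℝ} (h₁ : IsPosMonodSol Ω χ ϑ A d τ u₁ v₁)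
    (h₂ : IsPosMonodSol Ω χ ϑ A d τ u₂ v₂) {x : EuclideanSpace ℝ (Fin n)} (hx : x ∈ Ω) :
    u₁ x ≤ u₂ x ∧ v₁ x ≤ v₂ x := by
  obtain ⟨⟨huc₁, hvc₁, hu₁, hv₁, hu0₁, hv0₁, -, -, heu₁, hev₁⟩, hup₁, hvp₁⟩ := h₁
  obtain ⟨⟨huc₂, hvc₂, hu₂, hv₂, hu0₂, hv0₂, -, -, heu₂, hev₂⟩, hup₂, hvp₂⟩ := h₂
  set c : ℝ := max (ϑ / A / d) (1 / τ / d)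
  have hc : 0 < c := lt_max_of_lt_left (by positivity)
  have hcd₁ : ϑ / A ≤ d * c := by
    rw [mul_comm, ← div_le_iff₀ hd]
    exact le_max_left _ _
  have hcd₂ : 1 / τ ≤ d * c := by
    rw [mul_comm, ← div_le_iff₀ hd]
    exact le_max_right _ _
  obtain ⟨δ, hδ, hMP⟩ := exists_measure_bound_system_nonpos n hc
  obtain ⟨K, hKΩ, hK, hKvol⟩ := hΩo.measurableSet.exists_isCompact_sdiff_lt
    hΩb.measure_lt_top.ne (ENNReal.ofReal_pos.2 hδ).ne' (μ := volume)
  set P : ℝ → EuclideanSpace ℝ (Fin n) → ℝ := fun t y => (u₁ y - u₂ y) - t * u₁ y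
  set Q : ℝ → EuclideanSpace ℝ (Fin n) → ℝ := fun t y => (v₁ y - v₂ y) - t * v₁ y
  have hPc : ∀ t, ContinuousOn (P t) (closure Ω) := fun t =>
    (huc₁.sub huc₂).sub (continuousOn_const.mul huc₁)
  have hQc : ∀ t, ContinuousOn (Q t) (closure Ω) := fun t =>
    (hvc₁.sub hvc₂).sub (continuousOn_const.mul hvc₁)
  have hP : ∀ t, ContDiffOn ℝ 2 (P t) Ω := fun t => (hu₁.sub hu₂).sub (contDiffOn_const.mul hu₁)
  have hQ : ∀ t, ContDiffOn ℝ 2 (Q t) Ω := fun t => (hv₁.sub hv₂).sub (contDiffOn_const.mul hv₁)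
  have hLap : ∀ {f g : EuclideanSpace ℝ (Fin n) → ℝ}, ContDiffOn ℝ 2 f Ω → ContDiffOn ℝ 2 g Ω →
      ∀ t, ∀ y ∈ Ω, Lap (fun z => (f z - g z) - t * f z) y = (1 - t) * Lap f y - Lap g y := by
    intro f g hf hg t y hy
    have hf' := hf.contDiffAt (hΩo.mem_nhds hy)
    have hg' := hg.contDiffAt (hΩo.mem_nhds hy)
    rw [Lap_sub (hf'.sub hg') (contDiffAt_const.mul hf'), Lap_sub hf' hg', Lap_const_mul hf']
    ring
  have hPL : ∀ t, ∀ y ∈ Ω, d * Lap (P t) y =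
      χ * P t y - ϑ * A / ((A + v₁ y) * (A + v₂ y)) * Q t y +
        t * (ϑ * v₁ y * v₂ y / ((A + v₁ y) * (A + v₂ y))) := by
    intro t y hy
    have := monod_sub_identity (ϑ := ϑ) hA (t := t) (hvp₁ y hy).le (hvp₂ y hy).le
    rw [hLap hu₁ hu₂ t y hy]
    simp only [P, Q]
    linear_combination (1 - t) * heu₁ y hy - heu₂ y hy - this
  have hQL : ∀ t, ∀ y ∈ Ω, d * Lap (Q t) y = 1 / τ * (Q t y - P t y) := by
    intro t y hy
    rw [hLap hv₁ hv₂ t y hy]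
    simp only [P, Q]
    linear_combination (1 - t) * hev₁ y hy - hev₂ y hy
  have hext : ∀ t, 0 ≤ t → (∀ y ∈ K, P t y ≤ 0 ∧ Q t y ≤ 0) →
      ∀ y ∈ Ω, P t y ≤ 0 ∧ Q t y ≤ 0 := by
    intro t ht hKle y hy
    by_cases hyK : y ∈ K
    · exact hKle y hyK
    have hcl : closure (Ω \ K) ⊆ closure Ω := closure_mono sdiff_subset
    have hO : IsOpen (Ω \ K) := hΩo.sdiff hK.isClosed
    refine hMP (Ω \ K) hO (hΩb.subset sdiff_subset) hKvol.le (P t) (Q t)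
      ((hPc t).mono hcl) ((hQc t).mono hcl) ((hP t).mono sdiff_subset) ((hQ t).mono sdiff_subset)
      ?_ ?_ ?_ y ⟨hy, hyK⟩
    · intro z hz
      by_cases hzK : z ∈ K
      · exact hKle z hzK
      · have hzΩ : z ∉ Ω := fun h => hz.2 (by rw [hO.interior_eq]; exact ⟨h, hzK⟩)
        have hzf : z ∈ frontier Ω := ⟨hcl hz.1, by rwa [hΩo.interior_eq]⟩
        simp [P, Q, hu0₁ z hzf, hu0₂ z hzf, hv0₁ z hzf, hv0₂ z hzf]
    · rintro z ⟨hz, -⟩ hPz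
      have ha := hvp₁ z hz
      have hb := hvp₂ z hz
      have hbpos : 0 ≤ ϑ * A / ((A + v₁ z) * (A + v₂ z)) := by positivity
      have hble : ϑ * A / ((A + v₁ z) * (A + v₂ z)) ≤ ϑ / A := by
        rw [div_le_div_iff₀ (by positivity) hA, mul_assoc]
        exact mul_le_mul_of_nonneg_left (by nlinarith) hϑ.le
      have h0 : 0 ≤ max (Q t z) 0 := le_max_right _ _
      have h1 : ϑ * A / ((A + v₁ z) * (A + v₂ z)) * Q t z ≤ d * c * max (Q t z) 0 :=
        (mul_le_mul_of_nonneg_left (le_max_left _ _) hbpos).trans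
          (mul_le_mul_of_nonneg_right (hble.trans hcd₁) h0)
      have h2 : 0 ≤ t * (ϑ * v₁ z * v₂ z / ((A + v₁ z) * (A + v₂ z))) := by positivity
      have h3 : 0 ≤ χ * P t z := by positivity
      refine le_of_mul_le_mul_left ?_ hd
      rw [hPL t z hz]
      linarith
    · rintro z ⟨hz, -⟩ hQz
      have h0 : 0 ≤ max (P t z) 0 := le_max_right _ _
      have h1 : 1 / τ * P t z ≤ d * c * max (P t z) 0 :=
        (mul_le_mul_of_nonneg_left (le_max_left _ _) (by positivity)).trans
          (mul_le_mul_of_nonneg_right hcd₂ h0)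
      have h3 : 0 ≤ 1 / τ * Q t z := by positivity
      refine le_of_mul_le_mul_left ?_ hd
      rw [hQL t z hz]
      linarith
  by_cases hle : ∀ y ∈ K, u₁ y ≤ u₂ y ∧ v₁ y ≤ v₂ y
  · simpa [P, Q] using hext 0 le_rfl (by simpa [P, Q] using hle) x hx
  exfalso
  push Not at hle
  obtain ⟨y₁, hy₁K, hy₁⟩ := hle
  obtain ⟨x₀, hx₀K, hmax⟩ := hK.exists_isMaxOn ⟨y₁, hy₁K⟩
    (f := fun y => max ((u₁ y - u₂ y) / u₁ y) ((v₁ y - v₂ y) / v₁ y))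
    (((hu₁.continuousOn.mono hKΩ).sub (hu₂.continuousOn.mono hKΩ)).div
      (hu₁.continuousOn.mono hKΩ) (fun y hy => (hup₁ y (hKΩ hy)).ne') |>.sup
      (((hv₁.continuousOn.mono hKΩ).sub (hv₂.continuousOn.mono hKΩ)).div
      (hv₁.continuousOn.mono hKΩ) (fun y hy => (hvp₁ y (hKΩ hy)).ne')))
  set t : ℝ := max ((u₁ x₀ - u₂ x₀) / u₁ x₀) ((v₁ x₀ - v₂ x₀) / v₁ x₀) with ht
  have hKt : ∀ y ∈ K, max ((u₁ y - u₂ y) / u₁ y) ((v₁ y - v₂ y) / v₁ y) ≤ t :=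
    fun y hy => hmax hy
  have ht0 : 0 < t := by
    refine lt_of_lt_of_le ?_ (hKt y₁ hy₁K)
    rcases lt_or_ge (u₂ y₁) (u₁ y₁) with h | h
    · exact lt_max_of_lt_left (div_pos (sub_pos.2 h) (hup₁ _ (hKΩ hy₁K)))
    · exact lt_max_of_lt_right (div_pos (sub_pos.2 (hy₁ h)) (hvp₁ _ (hKΩ hy₁K)))
  have hall := hext t ht0.le fun y hy => by
    have h := max_le_iff.1 (hKt y hy)
    rw [div_le_iff₀ (hup₁ y (hKΩ hy)), div_le_iff₀ (hvp₁ y (hKΩ hy))] at h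
    exact ⟨sub_nonpos.2 h.1, sub_nonpos.2 h.2⟩
  have hx₀ : x₀ ∈ Ω := hKΩ hx₀K
  have hPne : P t x₀ ≠ 0 := by
    intro h0
    have hL := Lap_nonpos_of_isMaxOn hΩo (hP t) hx₀ fun y hy => h0.symm ▸ (hall y hy).1
    have ha := hvp₁ x₀ hx₀
    have hb := hvp₂ x₀ hx₀
    have h1 := hPL t x₀ hx₀
    have h2 : 0 < t * (ϑ * v₁ x₀ * v₂ x₀ / ((A + v₁ x₀) * (A + v₂ x₀))) := by positivity
    have h3 : 0 ≤ ϑ * A / ((A + v₁ x₀) * (A + v₂ x₀)) * -Q t x₀ :=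
      mul_nonneg (by positivity) (neg_nonneg.2 (hall x₀ hx₀).2)
    have h4 : d * Lap (P t) x₀ ≤ 0 := mul_nonpos_of_nonneg_of_nonpos hd.le hL
    rw [h0] at h1
    linarith
  rcases max_choice ((u₁ x₀ - u₂ x₀) / u₁ x₀) ((v₁ x₀ - v₂ x₀) / v₁ x₀) with h | h
  · rw [← ht, eq_div_iff (hup₁ x₀ hx₀).ne'] at h
    exact hPne (sub_eq_zero.2 h.symm)
  · rw [← ht, eq_div_iff (hvp₁ x₀ hx₀).ne'] at h
    have h0 : Q t x₀ = 0 := sub_eq_zero.2 h.symm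
    have hL := Lap_nonpos_of_isMaxOn hΩo (hQ t) hx₀ fun y hy => h0.symm ▸ (hall y hy).2
    have h4 : d * Lap (Q t) x₀ ≤ 0 := mul_nonpos_of_nonneg_of_nonpos hd.le hL
    rw [hQL t x₀ hx₀, h0, zero_sub] at h4
    have h5 : -P t x₀ ≤ 0 := by
      by_contra! h
      exact h4.not_gt (mul_pos (by positivity) h)
    exact hPne (le_antisymm (hall x₀ hx₀).1 (neg_nonpos.1 h5))

end Monod

/-- for the Monod-type steady state system on a bounded open set,
(i) any nonnegative classical solution satisfies 0 ≤ u, v ≤ ϑ/χ in Ω, and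
(ii) there is at most one positive classical solution. -/
theorem stmt18 {n : ℕ} (Ω : Set (EuclideanSpace ℝ (Fin n)))
    (hΩo : IsOpen Ω) (hΩb : Bornology.IsBounded Ω)
    (χ ϑ A d τ : ℝ) (hχ : 0 < χ) (hϑ : 0 < ϑ) (hA : 0 < A) (hd : 0 < d) (hτ : 0 < τ) :
    -- (i)
    (∀ u v : EuclideanSpace ℝ (Fin n) → ℝ, IsNonnegMonodSol Ω χ ϑ A d τ u v →
      ∀ x ∈ Ω, 0 ≤ u x ∧ u x ≤ ϑ / χ ∧ 0 ≤ v x ∧ v x ≤ ϑ / χ) ∧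
    -- (ii)
    (∀ u₁ v₁ u₂ v₂ : EuclideanSpace ℝ (Fin n) → ℝ,
      IsPosMonodSol Ω χ ϑ A d τ u₁ v₁ → IsPosMonodSol Ω χ ϑ A d τ u₂ v₂ →
      EqOn u₁ u₂ Ω ∧ EqOn v₁ v₂ Ω) := by
  refine ⟨fun u v h x hx => ?_, fun u₁ v₁ u₂ v₂ h₁ h₂ => ?_⟩
  · obtain ⟨hu, hv⟩ := h.le_div hΩo hΩb hχ hϑ hA hd hτ hx
    obtain ⟨-, -, -, -, -, -, hun, hvn, -, -⟩ := h
    exact ⟨hun x hx, hu, hvn x hx, hv⟩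
  · have h₁₂ := fun x hx => h₁.le hΩo hΩb hχ hϑ hA hd hτ h₂ (x := x) hx
    have h₂₁ := fun x hx => h₂.le hΩo hΩb hχ hϑ hA hd hτ h₁ (x := x) hx
    exact ⟨fun x hx => le_antisymm (h₁₂ x hx).1 (h₂₁ x hx).1,
      fun x hx => le_antisymm (h₁₂ x hx).2 (h₂₁ x hx).2⟩
end
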